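/- arXiv:math/0509081 — 2 statements merged into one kernel-verified Lean document; each statement's English description precedes it below -/
import Mathlib

section
/- Let k ≥ 2 be an integer, τ_0 < τ_1 < ⋯ < τ_{2k−3} reals, and c ∈ [τ_0, τ_{2k−3}]. Let Y_0 : [τ_0, τ_{2k−3}] → ℝ be 2k-times continuously differentiable and set g := Y_0^{(2k)}. Let Y : [τ_0, τ_{2k−3}] → ℝ be continuously differentiable and suppose (𝓗_k Y)(c) ≥ Y(c). Define E := (𝓗_k (Y − Y_0))(c) − (Y − Y_0)(c) and R := −∫_{τ_0}^{τ_{2k−3}} K(c,u)·(g(u) − g(c)) du, where K(c,u) := (c−u)_+^{2k−1}/(2k−1)! − (𝓗_k φ_u)(c) with φ_u(t) := (t−u)_+^{2k−1}/(2k−1)!. Then g(c)·e_k(c) ≤ E + R. -/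
open Set

/-- `IsHermiteSplineInterp k τ f H` says that `H` is a Hermite spline interpolant of `f`
of degree `2k-1` with knots `τ 0 < τ 1 < ⋯ < τ (2k-3)` (interior knots
`τ 1, …, τ (2k-4)`): `H` is `(2k-2)`-times continuously differentiable on
`[τ 0, τ (2k-3)]`, agrees on each knot interval with a polynomial of degree at most
`2k-1`, and matches values and first derivatives of `f` at all the knots. -/
def IsHermiteSplineInterp (k : ℕ) (τ : ℕ → ℝ) (f H : ℝ → ℝ) : Prop :=
  ContDiffOn ℝ (2*k-2 : ℕ) H (Icc (τ 0) (τ (2*k-3))) ∧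
  (∀ i, i < 2*k-3 → ∃ p : Polynomial ℝ, p.natDegree ≤ 2*k-1 ∧
    ∀ x ∈ Icc (τ i) (τ (i+1)), H x = p.eval x) ∧
  (∀ i, i < 2*k-2 →
    H (τ i) = f (τ i) ∧
    derivWithin H (Icc (τ 0) (τ (2*k-3))) (τ i)
      = derivWithin f (Icc (τ 0) (τ (2*k-3))) (τ i))

/-! A spline of degree `d + 1` and class `C^d` with `M ≥ d - 1` knot intervals that has a double
zero at every knot vanishes. Either it vanishes on a whole knot interval, and then the vanishing
spreads from interval to interval because all derivatives up to order `d` are continuous; or its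
zeros at the knots are separated by points where it does not vanish, and then repeated use of
Rolle's theorem produces more than `M` such separated zeros of the `d`-th derivative, which is
continuous and affine on each of the `M` knot intervals.

Hence the value at `c` of a Hermite spline interpolant of `f` is a fixed linear combination of the
data `f (τ i)`, `f' (τ i)`, which is exact on polynomials of degree at most `2k - 1`, so
Taylor's formula with integral remainder turns the interpolation error into the integral of
`K(c, u) f^{(2k)}(u)` (Peano).
Applied to `Y₀` and to the monomial `t^{2k} / (2k)!`, this gives the identity
`g(c) e_k(c) = E + R - ((𝓗_k Y)(c) - Y(c))`. -/

open Polynomial MeasureTheory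

section Derivatives

lemma hasDerivAt_iteratedDerivWithin {a b x : ℝ} {d m : ℕ} {f : ℝ → ℝ}
    (hf : ContDiffOn ℝ d f (Icc a b)) (hm : m < d) (hx : x ∈ Ioo a b) :
    HasDerivAt (iteratedDerivWithin m f (Icc a b))
      (iteratedDerivWithin (m + 1) f (Icc a b) x) x := by
  rw [iteratedDerivWithin_succ]
  exact ((hf.differentiableOn_iteratedDerivWithin (mod_cast hm)
    (uniqueDiffOn_Icc (hx.1.trans hx.2))) x (Ioo_subset_Icc_self hx)).hasDerivWithinAt.hasDerivAt
    (Icc_mem_nhds hx.1 hx.2)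

lemma iteratedDerivWithin_eq_of_subset {s t : Set ℝ} {f : ℝ → ℝ} {n : ℕ} {x : ℝ} (hst : s ⊆ t)
    (hs : UniqueDiffOn ℝ s) (ht : UniqueDiffOn ℝ t) (hf : ContDiffOn ℝ n f t) (hx : x ∈ s) :
    iteratedDerivWithin n f s x = iteratedDerivWithin n f t x := by
  simp only [iteratedDerivWithin, iteratedFDerivWithin_subset hst hs ht hf hx]

lemma iteratedDeriv_polynomial_eval (p : ℝ[X]) (n : ℕ) :
    iteratedDeriv n (fun x => p.eval x) = fun x => (derivative^[n] p).eval x := by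
  induction n with
  | zero => simp only [iteratedDeriv_zero, Function.iterate_zero, id_eq]
  | succ n ih =>
    funext x
    rw [iteratedDeriv_succ, ih, Function.iterate_succ_apply', Polynomial.deriv]

lemma contDiff_polynomial_eval (p : ℝ[X]) (n : WithTop ℕ∞) :
    ContDiff ℝ n (fun x => p.eval x) := by
  simpa only [coe_aeval_eq_eval] using p.contDiff_aeval (𝕜 := ℝ) n

lemma iteratedDerivWithin_eq_eval_of_eqOn {s t : Set ℝ} {f : ℝ → ℝ} {n : ℕ} {p : ℝ[X]}
    (hst : s ⊆ t) (hs : UniqueDiffOn ℝ s) (ht : UniqueDiffOn ℝ t) (hf : ContDiffOn ℝ n f t)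
    (hp : EqOn f (fun x => p.eval x) s) :
    EqOn (iteratedDerivWithin n f t) (fun x => (derivative^[n] p).eval x) s := fun x hx => by
  rw [← iteratedDerivWithin_eq_of_subset hst hs ht hf hx, iteratedDerivWithin_congr hp hx,
    iteratedDerivWithin_eq_iteratedDeriv hs (contDiff_polynomial_eval p n).contDiffAt hx,
    iteratedDeriv_polynomial_eval]

lemma iteratedDerivWithin_pow_div_factorial {s : Set ℝ} (hs : UniqueDiffOn ℝ s) (n : ℕ) {x : ℝ}
    (hx : x ∈ s) : iteratedDerivWithin n (fun t : ℝ => t ^ n / (n.factorial : ℝ)) s x = 1 := by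
  have hn : (n.factorial : ℝ) ≠ 0 := mod_cast n.factorial_ne_zero
  rw [iteratedDerivWithin_eq_iteratedDeriv hs (by fun_prop) hx, iteratedDeriv_div_const,
    iteratedDeriv_pow, Nat.descFactorial_self]
  simp [hn]

end Derivatives

section SeparatedZeros

/-- The first `n` terms of `z` are zeros of `f` in `s`, and between any two consecutive ones lies
a point where `f` does not vanish; in particular these terms increase. Counting zeros in this way
makes Rolle's theorem applicable to functions that vanish on intervals. -/
structure AreSeparatedZeros (f : ℝ → ℝ) (s : Set ℝ) (n : ℕ) (z : ℕ → ℝ) : Prop where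
  mem : ∀ i < n, z i ∈ s
  map_eq_zero : ∀ i < n, f (z i) = 0
  exists_ne_zero : ∀ i, i + 1 < n → ∃ y ∈ Ioo (z i) (z (i + 1)), f y ≠ 0

variable {f f' : ℝ → ℝ} {a b : ℝ} {n : ℕ} {z : ℕ → ℝ}

lemma exists_hasDerivAt_ne_zero (hab : a < b) (hf : ContinuousOn f (Icc a b))
    (hd : ∀ x ∈ Ioo a b, HasDerivAt f (f' x) x) (hne : f a ≠ f b) : ∃ x ∈ Ioo a b, f' x ≠ 0 := by
  obtain ⟨x, hx, hslope⟩ := exists_hasDerivAt_eq_slope f f' hab hf hd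
  exact ⟨x, hx, hslope ▸ div_ne_zero (sub_ne_zero.2 hne.symm) (sub_ne_zero.2 hab.ne')⟩

lemma exists_hasDerivAt_eq_zero_between_ne_zero (hf : ContinuousOn f (Icc a b))
    (hd : ∀ x ∈ Ioo a b, HasDerivAt f (f' x) x) (ha : f a = 0) (hb : f b = 0)
    (hne : ∃ y ∈ Ioo a b, f y ≠ 0) :
    ∃ e ∈ Ioo a b, f' e = 0 ∧ (∃ u ∈ Ioo a e, f' u ≠ 0) ∧ ∃ v ∈ Ioo e b, f' v ≠ 0 := by
  obtain ⟨y, hy, hfy⟩ := hne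
  obtain ⟨e, he, hmax⟩ :=
    isCompact_Icc.exists_isMaxOn ⟨y, Ioo_subset_Icc_self hy⟩ (hf.pow 2)
  have hfe : f e ≠ 0 := by
    have hle : f y ^ 2 ≤ f e ^ 2 := hmax (Ioo_subset_Icc_self hy)
    exact pow_ne_zero_iff two_ne_zero |>.1 ((sq_pos_of_ne_zero hfy).trans_le hle).ne'
  have hae : a < e := he.1.lt_of_ne (by rintro rfl; exact hfe ha)
  have heb : e < b := he.2.lt_of_ne (by rintro rfl; exact hfe hb)
  refine ⟨e, ⟨hae, heb⟩, ?_, ?_, ?_⟩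
  · have hsq : (2 : ℕ) * f e ^ (2 - 1) * f' e = 0 :=
      (hmax.isLocalMax (Icc_mem_nhds hae heb)).hasDerivAt_eq_zero ((hd e ⟨hae, heb⟩).pow 2)
    simpa [hfe] using hsq
  · exact exists_hasDerivAt_ne_zero hae (hf.mono (Icc_subset_Icc_right he.2))
      (fun x hx => hd x ⟨hx.1, hx.2.trans heb⟩) (ha ▸ hfe.symm)
  · exact exists_hasDerivAt_ne_zero heb (hf.mono (Icc_subset_Icc_left he.1))
      (fun x hx => hd x ⟨hae.trans hx.1, hx.2⟩) (hb ▸ hfe)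

namespace AreSeparatedZeros

lemma lt_succ {s : Set ℝ} (hz : AreSeparatedZeros f s n z) {i : ℕ} (hi : i + 1 < n) :
    z i < z (i + 1) := by
  obtain ⟨y, hy, -⟩ := hz.exists_ne_zero i hi
  exact hy.1.trans hy.2

lemma exists_deriv_zeros (hf : ContinuousOn f (Icc a b))
    (hd : ∀ x ∈ Ioo a b, HasDerivAt f (f' x) x) (hz : AreSeparatedZeros f (Icc a b) (n + 1) z) :
    ∃ e : ℕ → ℝ, ∀ i < n, e i ∈ Ioo (z i) (z (i + 1)) ∧ f' (e i) = 0 ∧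
      (∃ u ∈ Ioo (z i) (e i), f' u ≠ 0) ∧ ∃ v ∈ Ioo (e i) (z (i + 1)), f' v ≠ 0 := by
  have hgap : ∀ i < n, ∃ e ∈ Ioo (z i) (z (i + 1)), f' e = 0 ∧
      (∃ u ∈ Ioo (z i) e, f' u ≠ 0) ∧ ∃ v ∈ Ioo e (z (i + 1)), f' v ≠ 0 := by
    intro i hi
    have hl := (hz.mem i (by omega)).1
    have hr := (hz.mem (i + 1) (by omega)).2
    exact exists_hasDerivAt_eq_zero_between_ne_zero (hf.mono (Icc_subset_Icc hl hr))
      (fun x hx => hd x (Ioo_subset_Ioo hl hr hx)) (hz.map_eq_zero i (by omega))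
      (hz.map_eq_zero (i + 1) (by omega)) (hz.exists_ne_zero i (by omega))
  choose! e he using hgap
  exact ⟨e, he⟩

theorem rolle (hf : ContinuousOn f (Icc a b)) (hd : ∀ x ∈ Ioo a b, HasDerivAt f (f' x) x)
    (hz : AreSeparatedZeros f (Icc a b) (n + 1) z) :
    ∃ e, AreSeparatedZeros f' (Icc a b) n e := by
  obtain ⟨e, he⟩ := hz.exists_deriv_zeros hf hd
  refine ⟨e, fun i hi => ?_, fun i hi => (he i hi).2.1, fun i hi => ?_⟩
  · exact Icc_subset_Icc (hz.mem i (by omega)).1 (hz.mem (i + 1) (by omega)).2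
      (Ioo_subset_Icc_self (he i hi).1)
  · obtain ⟨v, hv, hfv⟩ := (he i (by omega)).2.2.2
    exact ⟨v, ⟨hv.1, hv.2.trans (he (i + 1) hi).1.1⟩, hfv⟩

theorem rolle_of_double_zeros (hf : ContinuousOn f (Icc a b))
    (hd : ∀ x ∈ Ioo a b, HasDerivAt f (f' x) x) (hz : AreSeparatedZeros f (Icc a b) (n + 1) z)
    (hz' : ∀ i < n + 1, f' (z i) = 0) :
    ∃ w, AreSeparatedZeros f' (Icc a b) (2 * n + 1) w := by
  obtain ⟨e, he⟩ := hz.exists_deriv_zeros hf hd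
  have hmem : ∀ i < n, e i ∈ Icc a b := fun i hi =>
    Icc_subset_Icc (hz.mem i (by omega)).1 (hz.mem (i + 1) (by omega)).2
      (Ioo_subset_Icc_self (he i hi).1)
  have heven (i : ℕ) : 2 * i % 2 = 0 ∧ 2 * i / 2 = i := by omega
  have hodd (i : ℕ) : (2 * i + 1) % 2 = 1 ∧ (2 * i + 1) / 2 = i := by omega
  have heven' (i : ℕ) : (2 * i + 1 + 1) % 2 = 0 ∧ (2 * i + 1 + 1) / 2 = i + 1 := by omega
  refine ⟨fun j => if j % 2 = 0 then z (j / 2) else e (j / 2), fun j hj => ?_, fun j hj => ?_,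
    fun j hj => ?_⟩ <;>
  obtain ⟨i, rfl | rfl⟩ := j.even_or_odd' <;>
  simp only [heven, hodd, heven', one_ne_zero, if_true, if_false]
  · exact hz.mem i (by omega)
  · exact hmem i (by omega)
  · exact hz' i (by omega)
  · exact (he i (by omega)).2.1
  · exact (he i (by omega)).2.2.1
  · exact (he i (by omega)).2.2.2

theorem iteratedDerivWithin_add {d m r : ℕ} (hf : ContDiffOn ℝ d f (Icc a b)) (hab : a < b)
    (hmr : m + r ≤ d)
    (hz : AreSeparatedZeros (iteratedDerivWithin m f (Icc a b)) (Icc a b) (n + r) z) :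
    ∃ w, AreSeparatedZeros (iteratedDerivWithin (m + r) f (Icc a b)) (Icc a b) n w := by
  induction r generalizing n with
  | zero => exact ⟨z, hz⟩
  | succ r ih =>
    rw [← Nat.add_assoc, Nat.add_right_comm] at hz
    obtain ⟨w, hw⟩ := ih (by omega) hz
    have hlt : m + r < d := hmr
    exact hw.rolle
      (hf.continuousOn_iteratedDerivWithin (mod_cast hlt.le) (uniqueDiffOn_Icc hab))
      (fun x hx => hasDerivAt_iteratedDerivWithin hf hlt hx)

lemma of_le {s : Set ℝ} {m : ℕ} (hz : AreSeparatedZeros f s n z) (hmn : m ≤ n) :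
    AreSeparatedZeros f s m z where
  mem i hi := hz.mem i (hi.trans_le hmn)
  map_eq_zero i hi := hz.map_eq_zero i (hi.trans_le hmn)
  exists_ne_zero i hi := hz.exists_ne_zero i (hi.trans_le hmn)

end AreSeparatedZeros

end SeparatedZeros

section Knots

variable {M : ℕ} {τ : ℕ → ℝ}

lemma knot_mem_Icc (hτ : MonotoneOn τ (Iic M)) {i : ℕ} (hi : i ≤ M) :
    τ i ∈ Icc (τ 0) (τ M) :=
  ⟨hτ M.zero_le hi i.zero_le, hτ hi self_mem_Iic hi⟩

lemma Icc_knots_subset (hτ : MonotoneOn τ (Iic M)) {i : ℕ} (hi : i < M) :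
    Icc (τ i) (τ (i + 1)) ⊆ Icc (τ 0) (τ M) :=
  Icc_subset_Icc (knot_mem_Icc hτ hi.le).1 (knot_mem_Icc hτ hi).2

lemma knot_lt_succ (hτ : StrictMonoOn τ (Iic M)) {i : ℕ} (hi : i < M) : τ i < τ (i + 1) :=
  hτ hi.le hi i.lt_succ_self

lemma exists_mem_Icc_knots (hM : 0 < M) (hτ : MonotoneOn τ (Iic M)) {x : ℝ}
    (hx : x ∈ Icc (τ 0) (τ M)) : ∃ i < M, x ∈ Icc (τ i) (τ (i + 1)) := by
  rcases hx.1.eq_or_lt with rfl | h0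
  · exact ⟨0, hM, le_rfl, hτ M.zero_le hM zero_le_one⟩
  · obtain ⟨i, hi, hxi⟩ := mem_iUnion₂.1 (Ioc_subset_biUnion_Ioc M τ ⟨h0, hx.2⟩)
    exact ⟨i, Finset.mem_range.1 hi, Ioc_subset_Icc_self hxi⟩

lemma eq_zero_of_natDegree_le_one {p : ℝ[X]} (hp : p.natDegree ≤ 1) {x y : ℝ} (hxy : x ≠ y)
    (hx : p.eval x = 0) (hy : p.eval y = 0) : p = 0 :=
  eq_zero_of_natDegree_lt_card_of_eval_eq_zero' p {x, y} (by simp [hx, hy])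
    (by rw [Finset.card_pair hxy]; omega)

theorem not_areSeparatedZeros_of_piecewise_affine {f : ℝ → ℝ} (hM : 0 < M)
    (hp : ∀ i < M, ∃ p : ℝ[X], p.natDegree ≤ 1 ∧
      EqOn f (fun x => p.eval x) (Icc (τ i) (τ (i + 1)))) (z : ℕ → ℝ) :
    ¬ AreSeparatedZeros f (Icc (τ 0) (τ M)) (M + 1) z := by
  intro hz
  have hstep : ∀ j < M, τ j ≤ z j → τ (j + 1) < z (j + 1) := by
    intro j hj hjz
    by_contra! hzj
    obtain ⟨p, hdeg, hfp⟩ := hp j hj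
    obtain ⟨y, hy, hfy⟩ := hz.exists_ne_zero j (by omega)
    have hlt := hz.lt_succ (i := j) (by omega)
    have hp0 : p = 0 := eq_zero_of_natDegree_le_one hdeg hlt.ne
      ((hfp ⟨hjz, hlt.le.trans hzj⟩).symm.trans (hz.map_eq_zero j (by omega)))
      ((hfp ⟨hjz.trans hlt.le, hzj⟩).symm.trans (hz.map_eq_zero (j + 1) (by omega)))
    exact hfy (by rw [hfp ⟨hjz.trans hy.1.le, hy.2.le.trans hzj⟩, hp0]; exact eval_zero)
  have hgt : ∀ j < M, τ (j + 1) < z (j + 1) := by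
    intro j
    induction j with
    | zero => exact fun hj => hstep 0 hj (hz.mem 0 (by omega)).1
    | succ j ih => exact fun hj => hstep (j + 1) hj (ih (by omega)).le
  have hlast := hgt (M - 1) (by omega)
  rw [Nat.sub_add_cancel hM] at hlast
  exact hlast.not_ge (hz.mem M (by omega)).2

end Knots

section Unisolvence

/-- The space of splines of degree at most `d + 1` and smoothness `C^d` on `[τ 0, τ M]`, with
knots `τ 0, …, τ M`, as functions on `ℝ` whose values outside `[τ 0, τ M]` are arbitrary. -/
def splineSpace (d M : ℕ) (τ : ℕ → ℝ) : Submodule ℝ (ℝ → ℝ) where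
  carrier := {S | ContDiffOn ℝ d S (Icc (τ 0) (τ M)) ∧
    ∀ i < M, ∃ p : ℝ[X], p.natDegree ≤ d + 1 ∧
      EqOn S (fun x => p.eval x) (Icc (τ i) (τ (i + 1)))}
  add_mem' := by
    rintro S T ⟨hS, hSp⟩ ⟨hT, hTp⟩
    refine ⟨hS.add hT, fun i hi => ?_⟩
    obtain ⟨p, hp, hpS⟩ := hSp i hi
    obtain ⟨q, hq, hqT⟩ := hTp i hi
    exact ⟨p + q, natDegree_add_le_of_degree_le hp hq, fun x hx => by simp [hpS hx, hqT hx]⟩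
  zero_mem' := ⟨contDiffOn_const, fun i _ => ⟨0, by simp, fun x _ => by simp⟩⟩
  smul_mem' := by
    rintro r S ⟨hS, hSp⟩
    refine ⟨hS.const_smul r, fun i hi => ?_⟩
    obtain ⟨p, hp, hpS⟩ := hSp i hi
    exact ⟨r • p, (natDegree_smul_le r p).trans hp, fun x hx => by simp [hpS hx]⟩

lemma polynomial_eq_zero_of_iterate_derivative_eval_eq_zero {K : Type*} [Field K] [CharZero K]
    {d : ℕ} {p : K[X]} (hp : p.natDegree ≤ d + 1) {s t : K} (hst : s ≠ t)
    (hs : ∀ m ≤ d, (derivative^[m] p).eval s = 0) (ht : p.eval t = 0) : p = 0 := by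
  by_contra hne
  have hdvd_s : (X - C s) ^ (d + 1) ∣ p :=
    (le_rootMultiplicity_iff hne).1 (lt_rootMultiplicity_of_isRoot_iterate_derivative hne hs)
  have hcop : IsCoprime ((X - C s) ^ (d + 1)) (X - C t) :=
    (isCoprime_X_sub_C_of_isUnit_sub (sub_ne_zero.2 hst).isUnit).pow_left
  have hdeg := natDegree_le_of_dvd (hcop.mul_dvd hdvd_s (dvd_iff_isRoot.2 ht)) hne
  rw [((monic_X_sub_C s).pow _).natDegree_mul (monic_X_sub_C t), natDegree_pow,
    natDegree_X_sub_C, natDegree_X_sub_C] at hdeg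
  omega

lemma eqOn_zero_uIcc_of_iteratedDerivWithin_eq_zero {I : Set ℝ} (hI : UniqueDiffOn ℝ I) {d : ℕ}
    {f : ℝ → ℝ} (hf : ContDiffOn ℝ d f I) {s t : ℝ} (hst : s ≠ t) (hsub : uIcc s t ⊆ I)
    {p : ℝ[X]} (hdeg : p.natDegree ≤ d + 1) (hp : EqOn f (fun x => p.eval x) (uIcc s t))
    (hs : ∀ m ≤ d, iteratedDerivWithin m f I s = 0) (ht : f t = 0) : EqOn f 0 (uIcc s t) := by
  have hp0 : p = 0 := by
    refine polynomial_eq_zero_of_iterate_derivative_eval_eq_zero hdeg hst (fun m hm => ?_)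
      ((hp right_mem_uIcc).symm.trans ht)
    rw [← hs m hm]
    exact (iteratedDerivWithin_eq_eval_of_eqOn hsub (uniqueDiffOn_uIcc hst) hI
      (hf.of_le (mod_cast hm)) hp left_mem_uIcc).symm
  intro x hx
  rw [hp hx, hp0]
  exact eval_zero

variable {d M : ℕ} {τ : ℕ → ℝ} {S : ℝ → ℝ}

lemma polynomial_eval_mem_splineSpace {p : ℝ[X]} (hp : p.natDegree ≤ d + 1) :
    (fun x => p.eval x) ∈ splineSpace d M τ :=
  ⟨(contDiff_polynomial_eval p d).contDiffOn, fun _ _ => ⟨p, hp, fun _ _ => rfl⟩⟩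

lemma eqOn_zero_piece_succ_iff (hτ : StrictMonoOn τ (Iic M)) (hS : S ∈ splineSpace d M τ)
    (h0 : ∀ i ≤ M, S (τ i) = 0) {i : ℕ} (hi : i + 1 < M) :
    EqOn S 0 (Icc (τ i) (τ (i + 1))) ↔ EqOn S 0 (Icc (τ (i + 1)) (τ (i + 1 + 1))) := by
  have hI : UniqueDiffOn ℝ (Icc (τ 0) (τ M)) :=
    uniqueDiffOn_Icc (hτ M.zero_le self_mem_Iic (by omega))
  have hderiv : ∀ j < M, EqOn S 0 (Icc (τ j) (τ (j + 1))) → ∀ m ≤ d,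
      EqOn (iteratedDerivWithin m S (Icc (τ 0) (τ M))) 0 (Icc (τ j) (τ (j + 1))) := by
    intro j hj hSj m hm x hx
    simpa using iteratedDerivWithin_eq_eval_of_eqOn (p := 0) (Icc_knots_subset hτ.monotoneOn hj)
      (uniqueDiffOn_Icc (knot_lt_succ hτ hj)) hI (hS.1.of_le (mod_cast hm))
      (fun y hy => by simpa using hSj hy) hx
  have hl := knot_lt_succ hτ (i := i) (by omega)
  have hr := knot_lt_succ hτ hi
  obtain ⟨p, hp, hpS⟩ := hS.2 i (by omega)
  obtain ⟨q, hq, hqS⟩ := hS.2 (i + 1) hi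
  constructor
  · intro h
    rw [← uIcc_of_le hr.le] at hqS ⊢
    exact eqOn_zero_uIcc_of_iteratedDerivWithin_eq_zero hI hS.1 hr.ne
      (by rw [uIcc_of_le hr.le]; exact Icc_knots_subset hτ.monotoneOn hi) hq hqS
      (fun m hm => hderiv i (by omega) h m hm (right_mem_Icc.2 hl.le)) (h0 _ (by omega))
  · intro h
    rw [← uIcc_of_ge hl.le] at hpS ⊢
    exact eqOn_zero_uIcc_of_iteratedDerivWithin_eq_zero hI hS.1 hl.ne'
      (by rw [uIcc_of_ge hl.le]; exact Icc_knots_subset hτ.monotoneOn (by omega)) hp hpS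
      (fun m hm => hderiv (i + 1) hi h m hm (left_mem_Icc.2 hr.le)) (h0 _ (by omega))

lemma eqOn_zero_of_eqOn_zero_piece (hτ : StrictMonoOn τ (Iic M))
    (hS : S ∈ splineSpace d M τ) (h0 : ∀ i ≤ M, S (τ i) = 0) {i : ℕ} (hi : i < M)
    (hSi : EqOn S 0 (Icc (τ i) (τ (i + 1)))) : EqOn S 0 (Icc (τ 0) (τ M)) := by
  have hfirst : ∀ j < M, (EqOn S 0 (Icc (τ j) (τ (j + 1))) ↔ EqOn S 0 (Icc (τ 0) (τ (0 + 1)))) := by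
    intro j
    induction j with
    | zero => exact fun _ => Iff.rfl
    | succ j ih => exact fun hj => (eqOn_zero_piece_succ_iff hτ hS h0 hj).symm.trans (ih (by omega))
  intro x hx
  obtain ⟨j, hj, hxj⟩ := exists_mem_Icc_knots (by omega) hτ.monotoneOn hx
  exact (hfirst j hj).2 ((hfirst i hi).1 hSi) hxj

lemma areSeparatedZeros_knots (hτ : StrictMonoOn τ (Iic M)) (hS : S ∈ splineSpace d M τ)
    (h0 : ∀ i ≤ M, S (τ i) = 0) (hne : ¬ EqOn S 0 (Icc (τ 0) (τ M))) :
    AreSeparatedZeros S (Icc (τ 0) (τ M)) (M + 1) τ where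
  mem i hi := knot_mem_Icc hτ.monotoneOn (by omega)
  map_eq_zero i hi := h0 i (by omega)
  exists_ne_zero i hi := by
    by_contra! hzero
    refine hne (eqOn_zero_of_eqOn_zero_piece hτ hS h0 (i := i) (by omega) fun x hx => ?_)
    rcases eq_endpoints_or_mem_Ioo_of_mem_Icc hx with rfl | rfl | hx
    · exact h0 i (by omega)
    · exact h0 (i + 1) (by omega)
    · exact hzero x hx

theorem eqOn_zero_of_mem_splineSpace_of_double_zeros (hM : 0 < M) (hd : 0 < d) (hdM : d ≤ M + 1)
    (hτ : StrictMonoOn τ (Iic M)) (hS : S ∈ splineSpace d M τ) (h0 : ∀ i ≤ M, S (τ i) = 0)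
    (h1 : ∀ i ≤ M, derivWithin S (Icc (τ 0) (τ M)) (τ i) = 0) :
    EqOn S 0 (Icc (τ 0) (τ M)) := by
  by_contra hne
  have hab : τ 0 < τ M := hτ M.zero_le self_mem_Iic hM
  have hderiv : ∀ x ∈ Ioo (τ 0) (τ M),
      HasDerivAt S (iteratedDerivWithin 1 S (Icc (τ 0) (τ M)) x) x := fun x hx => by
    simpa only [iteratedDerivWithin_zero] using hasDerivAt_iteratedDerivWithin hS.1 hd hx
  obtain ⟨w, hw⟩ := (areSeparatedZeros_knots hτ hS h0 hne).rolle_of_double_zeros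
    hS.1.continuousOn hderiv (fun i hi => by rw [iteratedDerivWithin_one]; exact h1 i (by omega))
  obtain ⟨v, hv⟩ := (hw.of_le (m := M + 1 + (d - 1)) (by omega)).iteratedDerivWithin_add hS.1 hab
    (by omega)
  rw [Nat.add_sub_cancel' hd] at hv
  refine not_areSeparatedZeros_of_piecewise_affine hM (fun i hi => ?_) v hv
  obtain ⟨p, hp, hpS⟩ := hS.2 i hi
  refine ⟨derivative^[d] p, (natDegree_iterate_derivative p d).trans (by omega), ?_⟩
  exact iteratedDerivWithin_eq_eval_of_eqOn (Icc_knots_subset hτ.monotoneOn hi)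
    (uniqueDiffOn_Icc (knot_lt_succ hτ hi)) (uniqueDiffOn_Icc hab) hS.1 hpS

end Unisolvence

section HermiteFunctional

/-- The linear functional `f ↦ ∑ i, (w i * f (x i) + v i * f' (x i))` of Hermite data at the nodes
`x i`, with derivatives taken within `s` (one-sided at the endpoints of an interval). -/
noncomputable def hermiteSum {ι : Type*} [Fintype ι] (s : Set ℝ) (x w v : ι → ℝ) (f : ℝ → ℝ) : ℝ :=
  ∑ i, (w i * f (x i) + v i * derivWithin f s (x i))

theorem exists_hermiteSum_eq_on_splineSpace {d M : ℕ} {τ : ℕ → ℝ} (hM : 0 < M) (hd : 0 < d)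
    (hdM : d ≤ M + 1) (hτ : StrictMonoOn τ (Iic M)) {c : ℝ} (hc : c ∈ Icc (τ 0) (τ M)) :
    ∃ w v : Fin (M + 1) → ℝ, ∀ S ∈ splineSpace d M τ,
      S c = hermiteSum (Icc (τ 0) (τ M)) (fun i : Fin (M + 1) => τ i) w v S := by
  have hdiff : ∀ S : splineSpace d M τ, ∀ i : Fin (M + 1),
      DifferentiableWithinAt ℝ S.1 (Icc (τ 0) (τ M)) (τ i) := fun S i =>
    S.2.1.differentiableOn (mod_cast hd.ne') _ (knot_mem_Icc hτ.monotoneOn (by omega))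
  let ev (x : ℝ) : splineSpace d M τ →ₗ[ℝ] ℝ := LinearMap.proj x ∘ₗ (splineSpace d M τ).subtype
  let dv (i : Fin (M + 1)) : splineSpace d M τ →ₗ[ℝ] ℝ :=
    { toFun := fun S => derivWithin S.1 (Icc (τ 0) (τ M)) (τ i)
      map_add' := fun S T => derivWithin_add (hdiff S i) (hdiff T i)
      map_smul' := fun r S => derivWithin_const_smul r (hdiff S i) }
  have hspan : ev c ∈ Submodule.span ℝ
      (range (Sum.elim (fun i : Fin (M + 1) => ev (τ i)) dv)) := by
    refine mem_span_of_iInf_ker_le_ker fun S hS => ?_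
    simp only [Submodule.mem_iInf, LinearMap.mem_ker] at hS
    exact eqOn_zero_of_mem_splineSpace_of_double_zeros hM hd hdM hτ S.2
      (fun i hi => hS (Sum.inl ⟨i, by omega⟩)) (fun i hi => hS (Sum.inr ⟨i, by omega⟩)) hc
  obtain ⟨u, hu⟩ := (Submodule.mem_span_range_iff_exists_fun ℝ).1 hspan
  refine ⟨u ∘ Sum.inl, u ∘ Sum.inr, fun S hS => ?_⟩
  have huS := LinearMap.congr_fun hu ⟨S, hS⟩
  simp only [Fintype.sum_sum_type, LinearMap.add_apply, LinearMap.sum_apply,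
    LinearMap.smul_apply, Sum.elim_inl, Sum.elim_inr, smul_eq_mul] at huS
  rw [hermiteSum, Finset.sum_add_distrib]
  exact huS.symm

end HermiteFunctional

section Peano

/-- The truncated power `(t - u)₊ ^ n / n!` as a function of `t`. For `n = 0` it is constantly
`1`, since `0 ^ 0 = 1`, and not the indicator of `t ≥ u`. -/
noncomputable def truncatedPower (n : ℕ) (u t : ℝ) : ℝ :=
  max (t - u) 0 ^ n / (n.factorial : ℝ)

lemma continuous_truncatedPower (n : ℕ) (t : ℝ) : Continuous fun u => truncatedPower n u t := by
  unfold truncatedPower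
  fun_prop

lemma truncatedPower_of_le {n : ℕ} {u t : ℝ} (h : u ≤ t) :
    truncatedPower n u t = (t - u) ^ n / (n.factorial : ℝ) := by
  rw [truncatedPower, max_eq_left (sub_nonneg.2 h)]

lemma truncatedPower_of_ge {n : ℕ} (hn : 0 < n) {u t : ℝ} (h : t ≤ u) :
    truncatedPower n u t = 0 := by
  rw [truncatedPower, max_eq_right (sub_nonpos.2 h), zero_pow hn.ne', zero_div]

lemma hasDerivAt_truncatedPower_succ {n : ℕ} (hn : 0 < n) (u t : ℝ) :
    HasDerivAt (truncatedPower (n + 1) u) (truncatedPower n u t) t := by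
  have hcont (m : ℕ) : Continuous (truncatedPower m u) := by
    unfold truncatedPower
    fun_prop
  refine hasDerivAt_of_hasDerivAt_of_ne' (x := u) (fun y hy => ?_) (hcont _).continuousAt
    (hcont _).continuousAt t
  rcases hy.lt_or_gt with hyu | huy
  · rw [truncatedPower_of_ge hn hyu.le]
    refine (hasDerivAt_const y (0 : ℝ)).congr_of_eventuallyEq ?_
    filter_upwards [Iio_mem_nhds hyu] with x hx
    exact truncatedPower_of_ge n.succ_pos (mem_Iio.1 hx).le
  · have hpow := ((((hasDerivAt_id' y).sub_const u).fun_pow (n + 1)).div_const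
      ((n + 1).factorial : ℝ))
    refine (hpow.congr_of_eventuallyEq ?_).congr_deriv ?_
    · filter_upwards [Ioi_mem_nhds huy] with x hx
      exact truncatedPower_of_le (mem_Ioi.1 hx).le
    · rw [truncatedPower_of_le huy.le, Nat.factorial_succ, Nat.add_sub_cancel]
      push_cast
      field_simp

lemma hermiteSum_truncatedPower_succ {ι : Type*} [Fintype ι] {s : Set ℝ} (hs : UniqueDiffOn ℝ s)
    {x : ι → ℝ} (hx : ∀ i, x i ∈ s) (w v : ι → ℝ) {n : ℕ} (hn : 0 < n) (u : ℝ) :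
    hermiteSum s x w v (truncatedPower (n + 1) u) =
      ∑ i, (w i * truncatedPower (n + 1) u (x i) + v i * truncatedPower n u (x i)) := by
  refine Finset.sum_congr rfl fun i _ => ?_
  rw [(hasDerivAt_truncatedPower_succ hn u (x i)).hasDerivWithinAt.derivWithin (hs _ (hx i))]

lemma continuous_hermiteSum_truncatedPower_succ {ι : Type*} [Fintype ι] {s : Set ℝ}
    (hs : UniqueDiffOn ℝ s) {x : ι → ℝ} (hx : ∀ i, x i ∈ s) (w v : ι → ℝ) {n : ℕ} (hn : 0 < n) :
    Continuous fun u => hermiteSum s x w v (truncatedPower (n + 1) u) := by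
  simp only [hermiteSum_truncatedPower_succ hs hx w v hn]
  exact continuous_finsetSum _ fun i _ =>
    ((continuous_truncatedPower _ _).const_mul _).add ((continuous_truncatedPower _ _).const_mul _)

lemma exists_taylorWithinEval_eq_eval (f : ℝ → ℝ) (n : ℕ) (s : Set ℝ) (a : ℝ) :
    ∃ p : ℝ[X], p.natDegree ≤ n ∧ taylorWithinEval f n s a = fun x => p.eval x := by
  refine ⟨∑ k ∈ Finset.range (n + 1), C ((k.factorial : ℝ)⁻¹ * iteratedDerivWithin k f s a) *
    (X - C a) ^ k, natDegree_sum_le_of_forall_le _ _ fun k hk => ?_, funext fun x => ?_⟩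
  · refine (natDegree_C_mul_le _ _).trans ?_
    rw [natDegree_pow, natDegree_X_sub_C, mul_one]
    exact Nat.lt_succ_iff.1 (Finset.mem_range.1 hk)
  · rw [taylor_within_apply, eval_finsetSum]
    refine Finset.sum_congr rfl fun k _ => ?_
    simp only [smul_eq_mul, eval_mul, eval_C, eval_pow, eval_sub, eval_X]
    ring

variable {a b : ℝ} {n : ℕ} {f : ℝ → ℝ}

lemma intervalIntegrable_mul_iteratedDerivWithin (hab : a < b) {φ : ℝ → ℝ}
    (hφ : ContinuousOn φ (Icc a b)) (hf : ContDiffOn ℝ n f (Icc a b)) :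
    IntervalIntegrable (fun u => φ u * iteratedDerivWithin n f (Icc a b) u) volume a b :=
  ContinuousOn.intervalIntegrable (by
    rw [uIcc_of_le hab.le]
    exact hφ.mul (hf.continuousOn_iteratedDerivWithin le_rfl (uniqueDiffOn_Icc hab)))

lemma taylorWithinEval_Icc_eq_of_le {x : ℝ} (hax : a < x) (hxb : x ≤ b)
    (hf : ContDiffOn ℝ n f (Icc a b)) (y : ℝ) :
    taylorWithinEval f n (Icc a x) a y = taylorWithinEval f n (Icc a b) a y := by
  simp only [taylor_within_apply]
  refine Finset.sum_congr rfl fun k hk => ?_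
  rw [iteratedDerivWithin_eq_of_subset (Icc_subset_Icc_right hxb) (uniqueDiffOn_Icc hax)
    (uniqueDiffOn_Icc (hax.trans_le hxb))
    (hf.of_le (mod_cast Nat.lt_succ_iff.1 (Finset.mem_range.1 hk))) (left_mem_Icc.2 hax.le)]

theorem eq_taylorWithinEval_add_integral_truncatedPower (hab : a < b) (hn : 0 < n)
    (hf : ContDiffOn ℝ (n + 1 : ℕ) f (Icc a b)) {x : ℝ} (hx : x ∈ Icc a b) :
    f x = taylorWithinEval f n (Icc a b) a x +
      ∫ u in a..b, truncatedPower n u x * iteratedDerivWithin (n + 1) f (Icc a b) u := by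
  have hint := intervalIntegrable_mul_iteratedDerivWithin hab
    (continuous_truncatedPower n x).continuousOn hf
  have hright : ∫ u in x..b, truncatedPower n u x * iteratedDerivWithin (n + 1) f (Icc a b) u = 0 :=
    intervalIntegral.integral_zero_ae (.of_forall fun u hu => by
      rw [uIoc_of_le hx.2] at hu
      rw [truncatedPower_of_ge hn hu.1.le, zero_mul])
  have hxu : x ∈ uIcc a b := by rwa [uIcc_of_le hab.le]
  rw [← intervalIntegral.integral_add_adjacent_intervals
    (hint.mono_set (uIcc_subset_uIcc_left hxu)) (hint.mono_set (uIcc_subset_uIcc_right hxu)),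
    hright, add_zero]
  rcases hx.1.eq_or_lt with rfl | hax
  · simp
  have hsub : Icc a x ⊆ Icc a b := Icc_subset_Icc_right hx.2
  have htaylor := taylor_integral_remainder (f := f) (x₀ := a) (x := x) (n := n)
    (by rw [uIcc_of_le hx.1]; exact hf.mono hsub)
  rw [uIcc_of_le hx.1, taylorWithinEval_Icc_eq_of_le hax hx.2 (hf.of_le (mod_cast n.le_succ)),
    sub_eq_iff_eq_add'] at htaylor
  rw [htaylor]
  congr 1
  refine intervalIntegral.integral_congr fun u hu => ?_
  rw [uIcc_of_le hx.1] at hu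
  simp only [smul_eq_mul]
  rw [truncatedPower_of_le hu.2, iteratedDerivWithin_eq_of_subset hsub (uniqueDiffOn_Icc hax)
    (uniqueDiffOn_Icc hab) hf hu]

theorem derivWithin_eq_taylorWithinEval_add_integral_truncatedPower (hab : a < b) (hn : 0 < n)
    (hf : ContDiffOn ℝ (n + 2 : ℕ) f (Icc a b)) {x : ℝ} (hx : x ∈ Icc a b) :
    derivWithin f (Icc a b) x =
      derivWithin (taylorWithinEval f (n + 1) (Icc a b) a) (Icc a b) x +
        ∫ u in a..b, truncatedPower n u x * iteratedDerivWithin (n + 2) f (Icc a b) u := by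
  have hI := uniqueDiffOn_Icc hab
  rw [(hasDerivAt_taylorWithinEval_succ f n).hasDerivWithinAt.derivWithin (hI x hx),
    iteratedDerivWithin_succ' (n := n + 1)]
  exact eq_taylorWithinEval_add_integral_truncatedPower hab hn
    (hf.derivWithin hI (mod_cast le_rfl)) hx

theorem hermiteSum_eq_taylor_add_integral {ι : Type*} [Fintype ι] (hab : a < b) (hn : 0 < n)
    (hf : ContDiffOn ℝ (n + 2 : ℕ) f (Icc a b)) {x : ι → ℝ} (hx : ∀ i, x i ∈ Icc a b)
    (w v : ι → ℝ) :
    hermiteSum (Icc a b) x w v f =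
      hermiteSum (Icc a b) x w v (taylorWithinEval f (n + 1) (Icc a b) a) +
        ∫ u in a..b, hermiteSum (Icc a b) x w v (truncatedPower (n + 1) u) *
          iteratedDerivWithin (n + 2) f (Icc a b) u := by
  have hint (m : ℕ) (r t : ℝ) : IntervalIntegrable (fun u => r * (truncatedPower m u t *
      iteratedDerivWithin (n + 2) f (Icc a b) u)) volume a b :=
    (intervalIntegrable_mul_iteratedDerivWithin hab
      (continuous_truncatedPower m t).continuousOn hf).const_mul r
  simp only [hermiteSum_truncatedPower_succ (uniqueDiffOn_Icc hab) hx w v hn, Finset.sum_mul,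
    add_mul, mul_assoc]
  rw [intervalIntegral.integral_finsetSum fun i _ => (hint _ _ _).add (hint _ _ _)]
  simp only [hermiteSum]
  rw [← Finset.sum_add_distrib]
  refine Finset.sum_congr rfl fun i _ => ?_
  rw [intervalIntegral.integral_add (hint _ _ _) (hint _ _ _),
    intervalIntegral.integral_const_mul, intervalIntegral.integral_const_mul,
    eq_taylorWithinEval_add_integral_truncatedPower hab n.succ_pos hf (hx i),
    derivWithin_eq_taylorWithinEval_add_integral_truncatedPower hab hn hf (hx i)]
  ring

theorem sub_hermiteSum_eq_integral {ι : Type*} [Fintype ι] (hab : a < b) (hn : 0 < n)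
    (hf : ContDiffOn ℝ (n + 2 : ℕ) f (Icc a b)) {x : ι → ℝ} (hx : ∀ i, x i ∈ Icc a b)
    {w v : ι → ℝ} {c : ℝ} (hc : c ∈ Icc a b)
    (hexact : ∀ p : ℝ[X], p.natDegree ≤ n + 1 →
      p.eval c = hermiteSum (Icc a b) x w v (fun t => p.eval t)) :
    f c - hermiteSum (Icc a b) x w v f =
      ∫ u in a..b, (truncatedPower (n + 1) u c -
        hermiteSum (Icc a b) x w v (truncatedPower (n + 1) u)) *
          iteratedDerivWithin (n + 2) f (Icc a b) u := by
  obtain ⟨p, hp, hTp⟩ := exists_taylorWithinEval_eq_eval f (n + 1) (Icc a b) a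
  have hTc : taylorWithinEval f (n + 1) (Icc a b) a c =
      hermiteSum (Icc a b) x w v (taylorWithinEval f (n + 1) (Icc a b) a) := by
    rw [hTp]
    exact hexact p hp
  simp only [sub_mul]
  rw [intervalIntegral.integral_sub
      (intervalIntegrable_mul_iteratedDerivWithin hab
        (continuous_truncatedPower (n + 1) c).continuousOn hf)
      (intervalIntegrable_mul_iteratedDerivWithin hab (continuous_hermiteSum_truncatedPower_succ
        (uniqueDiffOn_Icc hab) hx w v hn).continuousOn hf),
    eq_taylorWithinEval_add_integral_truncatedPower hab n.succ_pos hf hc,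
    hermiteSum_eq_taylor_add_integral hab hn hf hx w v, hTc]
  ring

end Peano

section HermiteSpline

/-- `H` is a Hermite spline interpolant of `f` at the knots `τ 0, …, τ M`: a spline of degree at
most `M + 2` with these knots which agrees with `f` to first order at each of them. The degree is
the one for which the number of conditions equals the dimension of the spline space; for
`M = 2 * k - 3` it is the degree `2 * k - 1` of the interpolant `𝓗_k f`. -/
structure IsHermiteSpline (M : ℕ) (τ : ℕ → ℝ) (f H : ℝ → ℝ) : Prop where
  mem_splineSpace : H ∈ splineSpace (M + 1) M τ
  apply_eq : ∀ i ≤ M, H (τ i) = f (τ i)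
  derivWithin_eq : ∀ i ≤ M,
    derivWithin H (Icc (τ 0) (τ M)) (τ i) = derivWithin f (Icc (τ 0) (τ M)) (τ i)

variable {M : ℕ} {τ : ℕ → ℝ} {c : ℝ}

lemma IsHermiteSplineInterp.isHermiteSpline {n : ℕ} {f H : ℝ → ℝ}
    (hH : IsHermiteSplineInterp (n + 2) τ f H) : IsHermiteSpline (2 * n + 1) τ f H where
  mem_splineSpace := ⟨hH.1, hH.2.1⟩
  apply_eq i hi := (hH.2.2 i (by omega)).1
  derivWithin_eq i hi := (hH.2.2 i (by omega)).2

namespace IsHermiteSpline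

lemma differentiableWithinAt {f H : ℝ → ℝ} (hτ : MonotoneOn τ (Iic M))
    (hH : IsHermiteSpline M τ f H) {i : ℕ} (hi : i ≤ M) :
    DifferentiableWithinAt ℝ H (Icc (τ 0) (τ M)) (τ i) :=
  hH.mem_splineSpace.1.differentiableOn (mod_cast M.succ_ne_zero) _ (knot_mem_Icc hτ hi)

lemma sub {f₁ f₂ H₁ H₂ : ℝ → ℝ} (hτ : MonotoneOn τ (Iic M))
    (hf₁ : ∀ i ≤ M, DifferentiableWithinAt ℝ f₁ (Icc (τ 0) (τ M)) (τ i))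
    (hf₂ : ∀ i ≤ M, DifferentiableWithinAt ℝ f₂ (Icc (τ 0) (τ M)) (τ i))
    (h₁ : IsHermiteSpline M τ f₁ H₁) (h₂ : IsHermiteSpline M τ f₂ H₂) :
    IsHermiteSpline M τ (f₁ - f₂) (H₁ - H₂) where
  mem_splineSpace := sub_mem h₁.mem_splineSpace h₂.mem_splineSpace
  apply_eq i hi := by rw [Pi.sub_apply, Pi.sub_apply, h₁.apply_eq i hi, h₂.apply_eq i hi]
  derivWithin_eq i hi := by
    rw [derivWithin_sub (h₁.differentiableWithinAt hτ hi) (h₂.differentiableWithinAt hτ hi),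
      derivWithin_sub (hf₁ i hi) (hf₂ i hi), h₁.derivWithin_eq i hi, h₂.derivWithin_eq i hi]

lemma apply_eq_hermiteSum {w v : Fin (M + 1) → ℝ}
    (hwv : ∀ S ∈ splineSpace (M + 1) M τ,
      S c = hermiteSum (Icc (τ 0) (τ M)) (fun i : Fin (M + 1) => τ i) w v S)
    {f H : ℝ → ℝ} (hH : IsHermiteSpline M τ f H) :
    H c = hermiteSum (Icc (τ 0) (τ M)) (fun i : Fin (M + 1) => τ i) w v f := by
  rw [hwv H hH.mem_splineSpace]
  refine Finset.sum_congr rfl fun i _ => ?_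
  rw [hH.apply_eq i (by omega), hH.derivWithin_eq i (by omega)]

end IsHermiteSpline

variable {Hφ : ℝ → ℝ → ℝ}

lemma continuousOn_peanoKernel (hM : 0 < M) (hτ : StrictMonoOn τ (Iic M))
    (hc : c ∈ Icc (τ 0) (τ M))
    (hHφ : ∀ u ∈ Icc (τ 0) (τ M), IsHermiteSpline M τ (truncatedPower (M + 2) u) (Hφ u)) :
    ContinuousOn (fun u => truncatedPower (M + 2) u c - Hφ u c) (Icc (τ 0) (τ M)) := by
  obtain ⟨w, v, hwv⟩ := exists_hermiteSum_eq_on_splineSpace hM M.succ_pos le_rfl hτ hc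
  have hI := uniqueDiffOn_Icc (hτ M.zero_le self_mem_Iic hM)
  have hsum := continuous_hermiteSum_truncatedPower_succ hI
    (fun i : Fin (M + 1) => knot_mem_Icc hτ.monotoneOn i.is_le) w v M.succ_pos
  exact ((continuous_truncatedPower (M + 2) c).sub hsum).continuousOn.congr fun u hu =>
    congrArg _ ((hHφ u hu).apply_eq_hermiteSum hwv)

theorem sub_hermiteSpline_eq_integral_peanoKernel (hM : 0 < M) (hτ : StrictMonoOn τ (Iic M))
    (hc : c ∈ Icc (τ 0) (τ M))
    (hHφ : ∀ u ∈ Icc (τ 0) (τ M), IsHermiteSpline M τ (truncatedPower (M + 2) u) (Hφ u))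
    {f H : ℝ → ℝ} (hf : ContDiffOn ℝ (M + 3 : ℕ) f (Icc (τ 0) (τ M)))
    (hH : IsHermiteSpline M τ f H) :
    f c - H c = ∫ u in (τ 0)..(τ M), (truncatedPower (M + 2) u c - Hφ u c) *
      iteratedDerivWithin (M + 3) f (Icc (τ 0) (τ M)) u := by
  obtain ⟨w, v, hwv⟩ := exists_hermiteSum_eq_on_splineSpace hM M.succ_pos le_rfl hτ hc
  have hab : τ 0 < τ M := hτ M.zero_le self_mem_Iic hM
  rw [hH.apply_eq_hermiteSum hwv,
    sub_hermiteSum_eq_integral hab M.succ_pos hf (fun i => knot_mem_Icc hτ.monotoneOn i.is_le) hc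
      fun p hp => hwv _ (polynomial_eval_mem_splineSpace hp)]
  refine intervalIntegral.integral_congr fun u hu => ?_
  rw [uIcc_of_le hab.le] at hu
  simp only [(hHφ u hu).apply_eq_hermiteSum hwv]

end HermiteSpline

theorem stmt2_general {M : ℕ} (hM : 0 < M) {τ : ℕ → ℝ} (hτ : StrictMonoOn τ (Iic M))
    {c : ℝ} (hc : c ∈ Icc (τ 0) (τ M)) {Y₀ Y g : ℝ → ℝ}
    (hY₀ : ContDiffOn ℝ (M + 3 : ℕ) Y₀ (Icc (τ 0) (τ M)))
    (hg : EqOn g (iteratedDerivWithin (M + 3) Y₀ (Icc (τ 0) (τ M))) (Icc (τ 0) (τ M)))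
    (hY : ∀ i ≤ M, DifferentiableWithinAt ℝ Y (Icc (τ 0) (τ M)) (τ i))
    {HY HD He : ℝ → ℝ} {Hφ : ℝ → ℝ → ℝ} (hHY : IsHermiteSpline M τ Y HY)
    (hHD : IsHermiteSpline M τ (Y - Y₀) HD)
    (hHφ : ∀ u ∈ Icc (τ 0) (τ M), IsHermiteSpline M τ (truncatedPower (M + 2) u) (Hφ u))
    (hHe : IsHermiteSpline M τ (fun x => x ^ (M + 3) / ((M + 3).factorial : ℝ)) He) :
    g c * (c ^ (M + 3) / ((M + 3).factorial : ℝ) - He c) =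
      (HD c - (Y c - Y₀ c)) +
        (- ∫ u in (τ 0)..(τ M), (truncatedPower (M + 2) u c - Hφ u c) * (g u - g c)) -
        (HY c - Y c) := by
  have hab : τ 0 < τ M := hτ M.zero_le self_mem_Iic hM
  have hY₀' : ∀ i ≤ M, DifferentiableWithinAt ℝ Y₀ (Icc (τ 0) (τ M)) (τ i) := fun i hi =>
    hY₀.differentiableOn (mod_cast (M + 2).succ_ne_zero) _ (knot_mem_Icc hτ.monotoneOn hi)
  have hHY₀ : IsHermiteSpline M τ Y₀ (HY - HD) := by
    simpa only [sub_sub_cancel] using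
      hHY.sub hτ.monotoneOn hY (fun i hi => (hY i hi).sub (hY₀' i hi)) hHD
  have hY₀_error : Y₀ c - (HY c - HD c) =
      ∫ u in (τ 0)..(τ M), (truncatedPower (M + 2) u c - Hφ u c) * g u := by
    rw [← Pi.sub_apply, sub_hermiteSpline_eq_integral_peanoKernel hM hτ hc hHφ hY₀ hHY₀]
    refine intervalIntegral.integral_congr fun u hu => ?_
    rw [uIcc_of_le hab.le] at hu
    simp only [hg hu]
  have hmonomial_error : c ^ (M + 3) / ((M + 3).factorial : ℝ) - He c =
      ∫ u in (τ 0)..(τ M), (truncatedPower (M + 2) u c - Hφ u c) := by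
    rw [sub_hermiteSpline_eq_integral_peanoKernel hM hτ hc hHφ
      (f := fun x => x ^ (M + 3) / ((M + 3).factorial : ℝ)) (by fun_prop) hHe]
    refine intervalIntegral.integral_congr fun u hu => ?_
    rw [uIcc_of_le hab.le] at hu
    simp only [iteratedDerivWithin_pow_div_factorial (uniqueDiffOn_Icc hab) (M + 3) hu, mul_one]
  have hK := continuousOn_peanoKernel hM hτ hc hHφ
  have hKg : ContinuousOn (fun u => (truncatedPower (M + 2) u c - Hφ u c) * g u)
      (Icc (τ 0) (τ M)) :=
    hK.mul ((hY₀.continuousOn_iteratedDerivWithin le_rfl (uniqueDiffOn_Icc hab)).congr hg)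
  simp only [mul_sub]
  rw [intervalIntegral.integral_sub (hKg.intervalIntegrable_of_Icc hab.le)
    ((hK.mul_const (g c)).intervalIntegrable_of_Icc hab.le), intervalIntegral.integral_mul_const,
    ← hmonomial_error, ← hY₀_error]
  ring

/-- the key inequality `g(c)·e_k(c) ≤ E + R` of Lemma 4.2 of the paper,
where `e_k` is the Hermite interpolation error for `x^{2k}/(2k)!`, `E` is the
interpolation error of `Y - Y₀` at `c`, and `R` is the Peano-kernel remainder
involving `g = Y₀^{(2k)}`. -/
theorem stmt2 (k : ℕ) (hk : 2 ≤ k) (τ : ℕ → ℝ)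
    (hτ : ∀ i, i < 2*k-3 → τ i < τ (i+1))
    (c : ℝ) (hc : c ∈ Icc (τ 0) (τ (2*k-3)))
    (Y₀ : ℝ → ℝ) (hY₀ : ContDiffOn ℝ (2*k : ℕ) Y₀ (Icc (τ 0) (τ (2*k-3))))
    (g : ℝ → ℝ)
    (hg : ∀ x ∈ Icc (τ 0) (τ (2*k-3)),
      g x = iteratedDerivWithin (2*k) Y₀ (Icc (τ 0) (τ (2*k-3))) x)
    (Y : ℝ → ℝ) (hY : ContDiffOn ℝ 1 Y (Icc (τ 0) (τ (2*k-3))))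
    (HY : ℝ → ℝ) (hHY : IsHermiteSplineInterp k τ Y HY)
    (hYc : HY c ≥ Y c)
    (HD : ℝ → ℝ) (hHD : IsHermiteSplineInterp k τ (fun x => Y x - Y₀ x) HD)
    (Hφ : ℝ → ℝ → ℝ)
    (hHφ : ∀ u ∈ Icc (τ 0) (τ (2*k-3)),
      IsHermiteSplineInterp k τ
        (fun t => max (t - u) 0 ^ (2*k-1) / (Nat.factorial (2*k-1) : ℝ)) (Hφ u))
    (He : ℝ → ℝ)
    (hHe : IsHermiteSplineInterp k τ
      (fun x => x ^ (2*k) / (Nat.factorial (2*k) : ℝ)) He) :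
    g c * (c ^ (2*k) / (Nat.factorial (2*k) : ℝ) - He c) ≤
      (HD c - (Y c - Y₀ c)) +
      (- ∫ u in (τ 0)..(τ (2*k-3)),
          (max (c - u) 0 ^ (2*k-1) / (Nat.factorial (2*k-1) : ℝ) - Hφ u c) *
            (g u - g c)) := by
  obtain ⟨n, rfl⟩ := Nat.exists_eq_add_of_le' hk
  have hmono : StrictMonoOn τ (Iic (2 * n + 1)) :=
    strictMonoOn_of_lt_add_one ordConnected_Iic fun i _ _ hi => hτ i hi
  exact (stmt2_general (2 * n).succ_pos hmono hc hY₀ hg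
    (fun i hi => hY.differentiableOn one_ne_zero _ (knot_mem_Icc hmono.monotoneOn hi))
    hHY.isHermiteSpline hHD.isHermiteSpline (fun u hu => (hHφ u hu).isHermiteSpline)
    hHe.isHermiteSpline).trans_le (sub_le_self _ (sub_nonneg.2 hYc))
end

section
/- Let k ≥ 3 be an integer, n ≥ 1, and x_1,…,x_n ∈ (0,∞) data points. Let ĝ : (0,∞) → (0,∞) be continuous and let τ_0 < τ_1 < ⋯ < τ_{2k−3} be points in (0,∞) such that: (H1) for every x > 0, x^k/k ≥ (1/n)∑_{i : x_i ≤ x} (x − x_i)^{k−1}/ĝ(x_i); (H2) for each j = 0,…,2k−3, equality holds in (H1) at x = τ_j, and moreover τ_j^{k−1}/(k−1) = (1/n)∑_{i : x_i ≤ τ_j} (τ_j − x_i)^{k−2}/ĝ(x_i); (H3) the restriction of ĝ to [τ_0, τ_{2k−3}] is (k−2)-times continuously differentiable and agrees on each interval [τ_j, τ_{j+1}], j = 0,…,2k−4, with a polynomial of degree at most k−1. Let g_0 : (0,∞) → (0,∞) be continuous, set γ := g_0(τ_0), and define on [τ_0, τ_{2k−3}] the functions Y_n(x) := (1/n)∑_{i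 : x_i ≤ x} (x − x_i)^{k−1}/(k−1)!, f̌(x) := −∫_{τ_0}^x ((x−t)^{k−1}/(k−1)!)·(1/ĝ(t) − 1/γ)·(ĝ(t) − g_0(t)) dt, and Δ(x) := (1/n)∑_{i : τ_0 < x_i ≤ x} ((x − x_i)^{k−1}/(k−1)!)·(1/ĝ(x_i) − 1/γ) − ∫_{τ_0}^x ((x−t)^{k−1}/(k−1)!)·(1/ĝ(t) − 1/γ)·g_0(t) dt. Then for every x ∈ [τ_0, τ_{2k−3}]: (𝓗_k Y_n)(x) − Y_n(x) ≥ γ·( (f̌(x) − (𝓗_k f̌)(x)) + (Δ(x) − (𝓗_k Δ)(x)) ). -/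
open Set

/-!
Let `F = Y_n + γ (f̌ + Δ)` and let `W` be the difference of the two sides of (H1). In
`F + γ / (k - 1)! * W` the contributions of the data points beyond `τ 0` cancel, and so do those of
`g₀`; what is left is a polynomial plus the `k`-fold integral of `ĝ - γ`, a spline of degree
`2k - 1`. By (H2), `W` vanishes to second order at the knots, so this spline interpolates `F` there
and must equal `𝓗_k F = 𝓗_k Y_n + γ (𝓗_k f̌ + 𝓗_k Δ)`. As `W ≥ 0` by (H1), `F ≤ 𝓗_k F`.

Uniqueness of the interpolant is a Rolle count. A spline of class `C^(N + 1)` and degree at most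
`N + 2` with `N` pieces and double zeros at its `N + 1` knots has a derivative with `2N + 1` zeros,
hence, after `N` further differentiations, a continuous piecewise linear function with `N + 1`
zeros, one more than its `N` pieces allow.
-/

section SeparatedZeros

/-- `SeparatedZeros f s m z` says that `z 0 < z 1 < ⋯ < z m` are `m + 1` zeros of `f` in `s`, with
`f` not vanishing identically between consecutive ones. These are the zeros that Rolle's theorem
counts for functions, such as splines, which may vanish on whole intervals. -/
structure SeparatedZeros (f : ℝ → ℝ) (s : Set ℝ) (m : ℕ) (z : ℕ → ℝ) : Prop where
  mem : ∀ i ≤ m, z i ∈ s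
  eq_zero : ∀ i ≤ m, f (z i) = 0
  exists_ne_zero : ∀ i < m, ∃ y ∈ Ioo (z i) (z (i + 1)), f y ≠ 0

variable {f f' : ℝ → ℝ} {s : Set ℝ} {a b : ℝ} {m : ℕ} {z : ℕ → ℝ}

lemma exists_deriv_eq_zero_and_ne_zero
    (hf : ∀ x ∈ Icc a b, HasDerivWithinAt f (f' x) (Icc a b) x)
    (ha : f a = 0) (hb : f b = 0) (hne : ∃ y ∈ Ioo a b, f y ≠ 0) :
    ∃ w ∈ Ioo a b, f' w = 0 ∧ f w ≠ 0 := by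
  obtain ⟨y, hy, hfy⟩ := hne
  have hcont : ContinuousOn f (Icc a b) := fun x hx => (hf x hx).continuousWithinAt
  obtain ⟨w, hw, hmax⟩ := isCompact_Icc.exists_isMaxOn ⟨y, Ioo_subset_Icc_self hy⟩ (hcont.pow 2)
  have hfw : f w ≠ 0 := by
    have hle : f y ^ 2 ≤ f w ^ 2 := hmax (Ioo_subset_Icc_self hy)
    exact pow_ne_zero_iff two_ne_zero |>.1 (((sq_pos_of_ne_zero hfy).trans_le hle).ne')
  have hwa : a ≠ w := by rintro rfl; exact hfw ha
  have hwb : w ≠ b := by rintro rfl; exact hfw hb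
  have hw' : w ∈ Ioo a b := ⟨hw.1.lt_of_ne hwa, hw.2.lt_of_ne hwb⟩
  have hnhds : Icc a b ∈ nhds w := Icc_mem_nhds hw'.1 hw'.2
  have hzero := (hmax.isLocalMax hnhds).hasDerivAt_eq_zero (((hf w hw).hasDerivAt hnhds).pow 2)
  refine ⟨w, hw', ?_, hfw⟩
  simpa [hfw] using hzero

lemma exists_deriv_ne_zero_of_ne (hab : a < b)
    (hf : ∀ x ∈ Icc a b, HasDerivWithinAt f (f' x) (Icc a b) x) (h : f a ≠ f b) :
    ∃ c ∈ Ioo a b, f' c ≠ 0 := by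
  obtain ⟨c, hc, hslope⟩ := exists_hasDerivAt_eq_slope f f' hab
    (fun x hx => (hf x hx).continuousWithinAt)
    fun x hx => (hf x (Ioo_subset_Icc_self hx)).hasDerivAt (Icc_mem_nhds hx.1 hx.2)
  refine ⟨c, hc, ?_⟩
  rw [hslope]
  exact div_ne_zero (sub_ne_zero.2 h.symm) (sub_ne_zero.2 hab.ne')

namespace SeparatedZeros

variable [hs : s.OrdConnected]

lemma exists_interlacing (hf : ∀ x ∈ s, HasDerivWithinAt f (f' x) s x)
    (h : SeparatedZeros f s m z) :
    ∃ w : ℕ → ℝ, ∀ i < m, w i ∈ Ioo (z i) (z (i + 1)) ∧ f' (w i) = 0 ∧ f (w i) ≠ 0 := by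
  have hex : ∀ i < m, ∃ w ∈ Ioo (z i) (z (i + 1)), f' w = 0 ∧ f w ≠ 0 := fun i hi =>
    have hsub : Icc (z i) (z (i + 1)) ⊆ s := hs.out (h.mem i hi.le) (h.mem (i + 1) hi)
    exists_deriv_eq_zero_and_ne_zero (fun x hx => (hf x (hsub hx)).mono hsub)
      (h.eq_zero i hi.le) (h.eq_zero (i + 1) hi) (h.exists_ne_zero i hi)
  choose! w hw using hex
  exact ⟨w, hw⟩

lemma exists_deriv (hf : ∀ x ∈ s, HasDerivWithinAt f (f' x) s x)
    (h : SeparatedZeros f s (m + 1) z) : ∃ w, SeparatedZeros f' s m w := by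
  obtain ⟨w, hw⟩ := h.exists_interlacing hf
  have hmem : ∀ i ≤ m, w i ∈ s := fun i hi =>
    hs.out (h.mem i (by omega)) (h.mem (i + 1) (by omega))
      (Ioo_subset_Icc_self (hw i (by omega)).1)
  refine ⟨w, hmem, fun i hi => (hw i (by omega)).2.1, fun i hi => ?_⟩
  obtain ⟨⟨-, hlt⟩, -, hne⟩ := hw i (by omega)
  obtain ⟨⟨hlt', -⟩, -, -⟩ := hw (i + 1) (by omega)
  have hsub : Icc (w i) (z (i + 1)) ⊆ s := hs.out (hmem i hi.le) (h.mem (i + 1) (by omega))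
  obtain ⟨c, hc, hc'⟩ := exists_deriv_ne_zero_of_ne hlt (fun x hx => (hf x (hsub hx)).mono hsub)
    (by rwa [h.eq_zero (i + 1) (by omega)])
  exact ⟨c, ⟨hc.1, hc.2.trans hlt'⟩, hc'⟩

lemma exists_deriv_of_double (hf : ∀ x ∈ s, HasDerivWithinAt f (f' x) s x)
    (h : SeparatedZeros f s m z) (h' : ∀ i ≤ m, f' (z i) = 0) :
    ∃ w, SeparatedZeros f' s (2 * m) w := by
  obtain ⟨w, hw⟩ := h.exists_interlacing hf
  have hwmem : ∀ i < m, w i ∈ s := fun i hi =>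
    hs.out (h.mem i hi.le) (h.mem (i + 1) hi) (Ioo_subset_Icc_self (hw i hi).1)
  have hne_deriv : ∀ {u v}, u ∈ s → v ∈ s → u < v → f u ≠ f v → ∃ y ∈ Ioo u v, f' y ≠ 0 :=
    fun hu hv huv hne => exists_deriv_ne_zero_of_ne huv
      (fun x hx => (hf x (hs.out hu hv hx)).mono (hs.out hu hv)) hne
  -- The zeros of `f'` are `z 0 < w 0 < z 1 < w 1 < ⋯ < z m`.
  refine ⟨fun j => if Even j then z (j / 2) else w (j / 2), fun j hj => ?_, fun j hj => ?_,
    fun j hj => ?_⟩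
  · split_ifs with hj'
    · exact h.mem _ (by omega)
    · exact hwmem _ (by grind)
  · split_ifs with hj'
    · exact h' _ (by omega)
    · exact (hw _ (by grind)).2.1
  · have hi : j / 2 < m := by omega
    obtain ⟨hwI, -, hne⟩ := hw (j / 2) hi
    obtain hj' | hj' := Nat.even_or_odd j
    · have hsucc : (j + 1) / 2 = j / 2 := by grind
      simp only [hj', hj'.add_one, Nat.not_even_iff_odd.2, if_true, if_false, hsucc]
      exact hne_deriv (h.mem _ hi.le) (hwmem _ hi) hwI.1 (by rw [h.eq_zero _ hi.le]; exact hne.symm)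
    · have hsucc : (j + 1) / 2 = j / 2 + 1 := by grind
      simp only [Nat.not_even_iff_odd.2 hj', hj'.add_one, if_true, if_false, hsucc]
      exact hne_deriv (hwmem _ hi) (h.mem _ hi) hwI.2 (by rwa [h.eq_zero _ hi])

end SeparatedZeros

end SeparatedZeros

section Spline

open Polynomial

/-- `IsSpline N τ r f` says that on `[τ 0, τ N]` the function `f` is a spline of degree at most
`r + 1` and class `C^r` with knots `τ 0, …, τ N`. The maximal smoothness for a given degree is the
only case needed here, so a single parameter records both. -/
structure IsSpline (N : ℕ) (τ : ℕ → ℝ) (r : ℕ) (f : ℝ → ℝ) : Prop where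
  contDiffOn : ContDiffOn ℝ r f (Icc (τ 0) (τ N))
  exists_polynomial : ∀ i < N, ∃ p : ℝ[X], p.natDegree ≤ r + 1 ∧
    ∀ x ∈ Icc (τ i) (τ (i + 1)), f x = p.eval x

lemma exists_mem_Icc_succ {N : ℕ} (hN : 0 < N) {τ : ℕ → ℝ} {x : ℝ} (hx : x ∈ Icc (τ 0) (τ N)) :
    ∃ i < N, x ∈ Icc (τ i) (τ (i + 1)) := by
  induction N, hN using Nat.le_induction with
  | base => exact ⟨0, one_pos, hx⟩
  | succ N _ ih =>
    obtain h | h := le_total x (τ N)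
    · obtain ⟨i, hi, hxi⟩ := ih ⟨hx.1, h⟩
      exact ⟨i, hi.trans N.lt_succ_self, hxi⟩
    · exact ⟨N, N.lt_succ_self, h, hx.2⟩

lemma exists_polynomial_derivative_eq {K : Type*} [Field K] [CharZero K] (p : K[X]) :
    ∃ q : K[X], derivative q = p := by
  induction p using Polynomial.induction_on' with
  | add p₁ p₂ h₁ h₂ =>
    obtain ⟨q₁, rfl⟩ := h₁
    obtain ⟨q₂, rfl⟩ := h₂
    exact ⟨q₁ + q₂, derivative_add⟩
  | monomial n c =>
    refine ⟨monomial (n + 1) (c / (n + 1)), ?_⟩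
    rw [derivative_monomial_succ, div_mul_cancel₀ _ n.cast_add_one_ne_zero]

lemma derivWithin_eq_eval_derivative {f : ℝ → ℝ} {s : Set ℝ} {a b : ℝ} (hab : a < b)
    (hsub : Icc a b ⊆ s) (hf : DifferentiableOn ℝ f s) {p : ℝ[X]}
    (hp : ∀ x ∈ Icc a b, f x = p.eval x) {x : ℝ} (hx : x ∈ Icc a b) :
    derivWithin f s x = (derivative p).eval x :=
  (uniqueDiffOn_Icc hab x hx).eq_deriv _ ((hf x (hsub hx)).hasDerivWithinAt.mono hsub)
    ((p.hasDerivAt x).hasDerivWithinAt.congr hp (hp x hx))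

variable {N : ℕ} {τ : ℕ → ℝ}

lemma mem_Icc_of_strictMonoOn (hτ : StrictMonoOn τ (Iic N)) {i : ℕ} (hi : i ≤ N) :
    τ i ∈ Icc (τ 0) (τ N) :=
  ⟨hτ.monotoneOn (mem_Iic.2 N.zero_le) hi i.zero_le, hτ.monotoneOn hi (mem_Iic.2 le_rfl) hi⟩

lemma Icc_succ_subset_of_strictMonoOn (hτ : StrictMonoOn τ (Iic N)) {i : ℕ} (hi : i < N) :
    Icc (τ i) (τ (i + 1)) ⊆ Icc (τ 0) (τ N) :=
  Icc_subset_Icc (mem_Icc_of_strictMonoOn hτ hi.le).1 (mem_Icc_of_strictMonoOn hτ hi).2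

lemma lt_succ_of_strictMonoOn (hτ : StrictMonoOn τ (Iic N)) {i : ℕ} (hi : i < N) :
    τ i < τ (i + 1) :=
  hτ hi.le hi i.lt_succ_self

lemma uniqueDiffOn_Icc_of_strictMonoOn (hN : 0 < N) (hτ : StrictMonoOn τ (Iic N)) :
    UniqueDiffOn ℝ (Icc (τ 0) (τ N)) :=
  uniqueDiffOn_Icc (hτ hN.le (mem_Iic.2 le_rfl) hN)

namespace IsSpline

variable {r : ℕ} {f f' g : ℝ → ℝ}

lemma congr (hτ : StrictMonoOn τ (Iic N)) (hf : IsSpline N τ r f)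
    (hfg : EqOn g f (Icc (τ 0) (τ N))) : IsSpline N τ r g := by
  refine ⟨hf.contDiffOn.congr hfg, fun i hi => ?_⟩
  obtain ⟨p, hdeg, hp⟩ := hf.exists_polynomial i hi
  exact ⟨p, hdeg, fun x hx => (hfg (Icc_succ_subset_of_strictMonoOn hτ hi hx)).trans (hp x hx)⟩

lemma of_polynomial {p : ℝ[X]} (hp : p.natDegree ≤ r + 1) : IsSpline N τ r (p.eval ·) :=
  ⟨by simpa using (p.contDiff_aeval (𝕜 := ℝ) r).contDiffOn, fun _ _ => ⟨p, hp, fun _ _ => rfl⟩⟩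

lemma add (hf : IsSpline N τ r f) (hg : IsSpline N τ r g) : IsSpline N τ r (f + g) := by
  refine ⟨hf.contDiffOn.add hg.contDiffOn, fun i hi => ?_⟩
  obtain ⟨p, hpdeg, hp⟩ := hf.exists_polynomial i hi
  obtain ⟨q, hqdeg, hq⟩ := hg.exists_polynomial i hi
  exact ⟨p + q, natDegree_add_le_of_degree_le hpdeg hqdeg, fun x hx => by simp [hp x hx, hq x hx]⟩

lemma const_smul (c : ℝ) (hf : IsSpline N τ r f) : IsSpline N τ r (c • f) := by
  refine ⟨contDiffOn_const.smul hf.contDiffOn, fun i hi => ?_⟩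
  obtain ⟨p, hpdeg, hp⟩ := hf.exists_polynomial i hi
  exact ⟨c • p, (natDegree_smul_le c p).trans hpdeg, fun x hx => by simp [hp x hx]⟩

lemma sub (hf : IsSpline N τ r f) (hg : IsSpline N τ r g) : IsSpline N τ r (f - g) := by
  simpa [sub_eq_add_neg] using hf.add (hg.const_smul (-1))

lemma sum {ι : Type*} {s : Finset ι} {F : ι → ℝ → ℝ} (hF : ∀ i ∈ s, IsSpline N τ r (F i)) :
    IsSpline N τ r (∑ i ∈ s, F i) :=
  Finset.sum_induction _ _ (fun _ _ => add)
    ⟨contDiffOn_const, fun _ _ => ⟨0, by simp, by simp⟩⟩ hF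

lemma differentiableOn (hf : IsSpline N τ (r + 1) f) :
    DifferentiableOn ℝ f (Icc (τ 0) (τ N)) :=
  hf.contDiffOn.differentiableOn (by simp)

protected lemma derivWithin (hN : 0 < N) (hτ : StrictMonoOn τ (Iic N))
    (hf : IsSpline N τ (r + 1) f) : IsSpline N τ r (derivWithin f (Icc (τ 0) (τ N))) where
  contDiffOn := by
    have hcd := hf.contDiffOn
    push_cast at hcd
    exact ((contDiffOn_succ_iff_derivWithin (uniqueDiffOn_Icc_of_strictMonoOn hN hτ)).1 hcd).2.2
  exists_polynomial i hi := by
    obtain ⟨p, hdeg, hp⟩ := hf.exists_polynomial i hi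
    exact ⟨derivative p, by have := natDegree_derivative_le p; omega, fun x hx =>
      derivWithin_eq_eval_derivative (lt_succ_of_strictMonoOn hτ hi)
        (Icc_succ_subset_of_strictMonoOn hτ hi) hf.differentiableOn hp hx⟩

lemma of_hasDerivWithinAt (hN : 0 < N) (hτ : StrictMonoOn τ (Iic N))
    (hff' : ∀ x ∈ Icc (τ 0) (τ N), HasDerivWithinAt f (f' x) (Icc (τ 0) (τ N)) x)
    (hf' : IsSpline N τ r f') : IsSpline N τ (r + 1) f where
  contDiffOn := by
    have hU := uniqueDiffOn_Icc_of_strictMonoOn hN hτ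
    push_cast
    exact (contDiffOn_succ_iff_derivWithin hU).2 ⟨fun x hx => (hff' x hx).differentiableWithinAt,
      by simp, hf'.contDiffOn.congr fun x hx => (hff' x hx).derivWithin (hU x hx)⟩
  exists_polynomial i hi := by
    obtain ⟨p, hdeg, hp⟩ := hf'.exists_polynomial i hi
    obtain ⟨q, rfl⟩ := exists_polynomial_derivative_eq p
    have hlt := lt_succ_of_strictMonoOn hτ hi
    have hsub := Icc_succ_subset_of_strictMonoOn hτ hi
    let Q : ℝ[X] := q + C (f (τ i) - q.eval (τ i))
    have hQ : ∀ x ∈ Icc (τ i) (τ (i + 1)), HasDerivWithinAt f ((derivative Q).eval x)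
        (Icc (τ i) (τ (i + 1))) x := fun x hx => by
      simpa [Q, hp x hx] using (hff' x (hsub hx)).mono hsub
    refine ⟨Q, ?_, eq_of_derivWithin_eq (fun x hx => (hQ x hx).differentiableWithinAt)
      Q.differentiable.differentiableOn (fun x hx => ?_) (by simp [Q])⟩
    · rw [natDegree_derivative] at hdeg
      rw [natDegree_add_C]
      omega
    · have hx' := uniqueDiffOn_Icc hlt x (Ico_subset_Icc_self hx)
      rw [(hQ x (Ico_subset_Icc_self hx)).derivWithin hx',
        (Q.hasDerivAt x).hasDerivWithinAt.derivWithin hx']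

end IsSpline

end Spline

section Uniqueness

open Polynomial

lemma pow_X_sub_C_dvd_of_isRoot_iterate_derivative {K : Type*} [Field K] [CharZero K]
    {p : K[X]} {a : K} {r : ℕ}
    (h : ∀ j ≤ r, (derivative^[j] p).IsRoot a) : (X - C a) ^ (r + 1) ∣ p := by
  obtain rfl | hp := eq_or_ne p 0
  · exact dvd_zero _
  · exact (le_rootMultiplicity_iff hp).1 (lt_rootMultiplicity_of_isRoot_iterate_derivative hp h)

lemma eq_zero_of_pow_dvd_of_isRoot {K : Type*} [Field K] {p : K[X]} {a b : K} {r : ℕ}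
    (hab : a ≠ b) (hdeg : p.natDegree ≤ r + 1) (ha : (X - C a) ^ (r + 1) ∣ p) (hb : p.IsRoot b) :
    p = 0 := by
  have hcop : IsCoprime ((X - C a) ^ (r + 1)) (X - C b) :=
    (isCoprime_X_sub_C_of_isUnit_sub (sub_ne_zero.2 hab).isUnit).pow_left
  refine eq_zero_of_dvd_of_natDegree_lt (hcop.mul_dvd ha (dvd_iff_isRoot.2 hb)) ?_
  rw [natDegree_mul (pow_ne_zero _ (X_sub_C_ne_zero a)) (X_sub_C_ne_zero b), natDegree_pow,
    natDegree_X_sub_C, natDegree_X_sub_C]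
  omega

variable {N : ℕ} {τ : ℕ → ℝ} {r : ℕ} {f : ℝ → ℝ}

namespace IsSpline

lemma eval_iterate_derivative_eq (hτ : StrictMonoOn τ (Iic N)) (hf : IsSpline N τ r f) {i : ℕ}
    (hi : i + 1 < N) {p q : ℝ[X]} (hp : ∀ x ∈ Icc (τ i) (τ (i + 1)), f x = p.eval x)
    (hq : ∀ x ∈ Icc (τ (i + 1)) (τ (i + 2)), f x = q.eval x) {j : ℕ} (hj : j ≤ r) :
    (derivative^[j] p).eval (τ (i + 1)) = (derivative^[j] q).eval (τ (i + 1)) := by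
  have hlt := lt_succ_of_strictMonoOn hτ (i.lt_succ_self.trans hi)
  have hlt' := lt_succ_of_strictMonoOn hτ hi
  induction j generalizing r f p q with
  | zero => exact (hp _ (right_mem_Icc.2 hlt.le)).symm.trans (hq _ (left_mem_Icc.2 hlt'.le))
  | succ j ih =>
    obtain ⟨r, rfl⟩ := Nat.exists_eq_add_one_of_ne_zero (show r ≠ 0 by omega)
    exact ih (hf.derivWithin (by omega) hτ)
      (fun x hx => derivWithin_eq_eval_derivative hlt
        (Icc_succ_subset_of_strictMonoOn hτ (by omega)) hf.differentiableOn hp hx)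
      (fun x hx => derivWithin_eq_eval_derivative hlt'
        (Icc_succ_subset_of_strictMonoOn hτ hi) hf.differentiableOn hq hx) (by omega)

lemma pow_X_sub_C_dvd_sub (hτ : StrictMonoOn τ (Iic N)) (hf : IsSpline N τ r f) {i : ℕ}
    (hi : i + 1 < N) {p q : ℝ[X]} (hp : ∀ x ∈ Icc (τ i) (τ (i + 1)), f x = p.eval x)
    (hq : ∀ x ∈ Icc (τ (i + 1)) (τ (i + 2)), f x = q.eval x) :
    (X - C (τ (i + 1))) ^ (r + 1) ∣ p - q :=
  pow_X_sub_C_dvd_of_isRoot_iterate_derivative fun j hj => by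
    rw [iterate_derivative_sub, IsRoot, eval_sub,
      hf.eval_iterate_derivative_eq hτ hi hp hq hj, sub_self]

lemma eqOn_zero_of_eqOn_zero_piece (hτ : StrictMonoOn τ (Iic N)) (hf : IsSpline N τ r f)
    (hzero : ∀ i ≤ N, f (τ i) = 0) {i : ℕ} (hi : i < N)
    (hpiece : EqOn f 0 (Icc (τ i) (τ (i + 1)))) : EqOn f 0 (Icc (τ 0) (τ N)) := by
  choose! p hdeg hp using hf.exists_polynomial
  have hleft : ∀ j < N, (p j).IsRoot (τ j) := fun j hj =>
    (hp j hj _ (left_mem_Icc.2 (lt_succ_of_strictMonoOn hτ hj).le)).symm.trans (hzero j hj.le)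
  have hright : ∀ j < N, (p j).IsRoot (τ (j + 1)) := fun j hj =>
    (hp j hj _ (right_mem_Icc.2 (lt_succ_of_strictMonoOn hτ hj).le)).symm.trans (hzero (j + 1) hj)
  have hstep : ∀ j, j + 1 < N → (p j = 0 ↔ p (j + 1) = 0) := by
    intro j hj
    have hj' : j < N := j.lt_succ_self.trans hj
    have hdvd := hf.pow_X_sub_C_dvd_sub hτ hj (hp j hj') (hp (j + 1) hj)
    constructor
    · intro h
      rw [h, zero_sub, dvd_neg] at hdvd
      exact eq_zero_of_pow_dvd_of_isRoot (lt_succ_of_strictMonoOn hτ hj).ne (hdeg _ hj) hdvd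
        (hright _ hj)
    · intro h
      rw [h, sub_zero] at hdvd
      exact eq_zero_of_pow_dvd_of_isRoot (lt_succ_of_strictMonoOn hτ hj').ne' (hdeg _ hj') hdvd
        (hleft _ hj')
  have hall : ∀ j < N, (p j = 0 ↔ p 0 = 0) := by
    intro j hj
    induction j with
    | zero => rfl
    | succ j ih => exact (hstep j hj).symm.trans (ih (by omega))
  have hpi : p i = 0 := by
    refine eq_zero_of_infinite_isRoot _
      ((Icc_infinite (lt_succ_of_strictMonoOn hτ hi)).mono fun y hy => ?_)
    exact (hp i hi y hy).symm.trans (hpiece hy)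
  intro x hx
  obtain ⟨j, hj, hxj⟩ := exists_mem_Icc_succ (Nat.zero_lt_of_lt hi) hx
  rw [hp j hj x hxj, (hall j hj).2 ((hall i hi).1 hpi), eval_zero, Pi.zero_apply]

protected lemma hasDerivWithinAt (hf : IsSpline N τ (r + 1) f) {x : ℝ} (hx : x ∈ Icc (τ 0) (τ N)) :
    HasDerivWithinAt f (derivWithin f (Icc (τ 0) (τ N)) x) (Icc (τ 0) (τ N)) x :=
  (hf.differentiableOn x hx).hasDerivWithinAt

lemma not_separatedZeros_of_piecewise_linear (hN : 0 < N) (hf : IsSpline N τ 0 f) {z : ℕ → ℝ} :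
    ¬SeparatedZeros f (Icc (τ 0) (τ N)) N z := by
  intro hz
  -- A linear piece has at most one separated zero, so the zeros outrun the knots.
  have hstep : ∀ i < N, τ i ≤ z i → τ (i + 1) < z (i + 1) := by
    intro i hi hle
    by_contra! hge
    obtain ⟨p, hdeg, hp⟩ := hf.exists_polynomial i hi
    obtain ⟨y, hy, hfy⟩ := hz.exists_ne_zero i hi
    have hlt := hy.1.trans hy.2
    have hroot : p.IsRoot (z i) :=
      (hp _ ⟨hle, hlt.le.trans hge⟩).symm.trans (hz.eq_zero i hi.le)
    have hroot' : p.IsRoot (z (i + 1)) :=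
      (hp _ ⟨hle.trans hlt.le, hge⟩).symm.trans (hz.eq_zero (i + 1) hi)
    have hp0 : p = 0 := eq_zero_of_pow_dvd_of_isRoot (r := 0) hlt.ne hdeg
      (by simpa using dvd_iff_isRoot.2 hroot) hroot'
    exact hfy (by rw [hp y ⟨hle.trans hy.1.le, hy.2.le.trans hge⟩, hp0, eval_zero])
  have hle : ∀ i ≤ N, τ i ≤ z i := by
    intro i hi
    induction i with
    | zero => exact (hz.mem 0 hi).1
    | succ i ih => exact (hstep i hi (ih (by omega))).le
  obtain ⟨M, rfl⟩ := Nat.exists_eq_succ_of_ne_zero hN.ne'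
  exact (hstep M (by omega) (hle M (by omega))).not_ge (hz.mem (M + 1) le_rfl).2

theorem not_separatedZeros (hN : 0 < N) (hτ : StrictMonoOn τ (Iic N)) (hf : IsSpline N τ r f)
    {z : ℕ → ℝ} : ¬SeparatedZeros f (Icc (τ 0) (τ N)) (N + r) z := by
  induction r generalizing f z with
  | zero => exact hf.not_separatedZeros_of_piecewise_linear hN
  | succ r ih =>
    intro hz
    obtain ⟨w, hw⟩ := SeparatedZeros.exists_deriv (m := N + r) (fun _ => hf.hasDerivWithinAt) hz
    exact ih (hf.derivWithin hN hτ) hw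

theorem eqOn_zero_of_double_zeros (hN : 0 < N) (hτ : StrictMonoOn τ (Iic N))
    (hf : IsSpline N τ (N + 1) f) (hzero : ∀ i ≤ N, f (τ i) = 0)
    (hzero' : ∀ i ≤ N, derivWithin f (Icc (τ 0) (τ N)) (τ i) = 0) :
    EqOn f 0 (Icc (τ 0) (τ N)) := by
  by_contra hne
  have hpiece : ∀ i < N, ∃ y ∈ Ioo (τ i) (τ (i + 1)), f y ≠ 0 := by
    intro i hi
    by_contra! hvanish
    refine hne (hf.eqOn_zero_of_eqOn_zero_piece hτ hzero hi fun y hy => ?_)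
    obtain rfl | rfl | hy := eq_endpoints_or_mem_Ioo_of_mem_Icc hy
    exacts [hzero i hi.le, hzero (i + 1) hi, hvanish y hy]
  have hsep : SeparatedZeros f (Icc (τ 0) (τ N)) N τ :=
    ⟨fun _ => mem_Icc_of_strictMonoOn hτ, hzero, hpiece⟩
  obtain ⟨w, hw⟩ := hsep.exists_deriv_of_double (fun _ => hf.hasDerivWithinAt) hzero'
  rw [two_mul] at hw
  exact (hf.derivWithin hN hτ).not_separatedZeros hN hτ hw

end IsSpline

end Uniqueness

section RepeatedIntegral

open MeasureTheory

/-- The `(m + 1)`-fold integral of `g` based at `a`, as the single integral against a power kernel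
given by Cauchy's formula. -/
noncomputable def repeatedIntegral (a : ℝ) (m : ℕ) (g : ℝ → ℝ) (t : ℝ) : ℝ :=
  ∫ s in a..t, (t - s) ^ m / (m.factorial : ℝ) * g s

lemma repeatedIntegral_zero (a : ℝ) (g : ℝ → ℝ) :
    repeatedIntegral a 0 g = fun t => ∫ s in a..t, g s := by
  funext t
  simp [repeatedIntegral]

lemma repeatedIntegral_const_mul (a : ℝ) (m : ℕ) (c : ℝ) (g : ℝ → ℝ) (t : ℝ) :
    repeatedIntegral a m (fun s => c * g s) t = c * repeatedIntegral a m g t := by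
  rw [repeatedIntegral, repeatedIntegral, ← intervalIntegral.integral_const_mul]
  simp only [mul_left_comm c]

variable {a b t : ℝ} {f g : ℝ → ℝ}

lemma repeatedIntegral_congr (m : ℕ) (hfg : EqOn f g (Icc a b)) (ht : t ∈ Icc a b) :
    repeatedIntegral a m f t = repeatedIntegral a m g t := by
  refine intervalIntegral.integral_congr fun s hs => ?_
  rw [uIcc_of_le ht.1] at hs
  simp only [hfg ⟨hs.1, hs.2.trans ht.2⟩]

lemma intervalIntegrable_of_continuousOn_Icc (hg : ContinuousOn g (Icc a b))
    (ht : t ∈ Icc a b) : IntervalIntegrable g volume a t :=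
  (hg.mono (Icc_subset_Icc_right ht.2)).intervalIntegrable_of_Icc ht.1

lemma repeatedIntegral_add (m : ℕ) (hf : ContinuousOn f (Icc a b)) (hg : ContinuousOn g (Icc a b))
    (ht : t ∈ Icc a b) :
    repeatedIntegral a m (fun s => f s + g s) t
      = repeatedIntegral a m f t + repeatedIntegral a m g t := by
  have hint : ∀ {h : ℝ → ℝ}, ContinuousOn h (Icc a b) →
      IntervalIntegrable (fun s => (t - s) ^ m / (m.factorial : ℝ) * h s) volume a t := fun hh =>
    intervalIntegrable_of_continuousOn_Icc (by fun_prop) ht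
  simp only [repeatedIntegral, mul_add, intervalIntegral.integral_add (hint hf) (hint hg)]

lemma hasDerivWithinAt_integral_Icc (hg : ContinuousOn g (Icc a b)) (ht : t ∈ Icc a b) :
    HasDerivWithinAt (fun u => ∫ s in a..u, g s) (g t) (Icc a b) t :=
  haveI : Fact (t ∈ Icc a b) := ⟨ht⟩
  intervalIntegral.integral_hasDerivWithinAt_right (intervalIntegrable_of_continuousOn_Icc hg ht)
    (hg.stronglyMeasurableAtFilter_nhdsWithin measurableSet_Icc t) (hg t ht)

lemma continuousOn_integral_Icc (hg : ContinuousOn g (Icc a b)) :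
    ContinuousOn (fun u => ∫ s in a..u, g s) (Icc a b) := fun _ hx =>
  (hasDerivWithinAt_integral_Icc hg hx).continuousWithinAt

lemma hasDerivAt_sub_pow_div_factorial (m : ℕ) (t s : ℝ) :
    HasDerivAt (fun s => (t - s) ^ (m + 1) / ((m + 1).factorial : ℝ))
      (-((t - s) ^ m / (m.factorial : ℝ))) s := by
  have h := (((hasDerivAt_id s).const_sub t).fun_pow (m + 1)).div_const ((m + 1).factorial : ℝ)
  refine h.congr_deriv ?_
  rw [Nat.factorial_succ]
  push_cast
  simp only [id]
  field_simp

lemma repeatedIntegral_succ (m : ℕ) (hg : ContinuousOn g (Icc a b)) (ht : t ∈ Icc a b) :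
    repeatedIntegral a (m + 1) g t = repeatedIntegral a m (fun u => ∫ s in a..u, g s) t := by
  have hsub : uIcc a t ⊆ Icc a b := by
    rw [uIcc_of_le ht.1]
    exact Icc_subset_Icc_right ht.2
  have hparts := intervalIntegral.integral_mul_deriv_eq_deriv_mul_of_hasDerivWithinAt
    (fun s _ => (hasDerivAt_sub_pow_div_factorial m t s).hasDerivWithinAt)
    (fun s hs => (hasDerivWithinAt_integral_Icc hg (hsub hs)).mono hsub)
    (Continuous.intervalIntegrable (by fun_prop) a t) (intervalIntegrable_of_continuousOn_Icc hg ht)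
  simpa [repeatedIntegral] using hparts

lemma hasDerivWithinAt_repeatedIntegral_succ (m : ℕ) (hg : ContinuousOn g (Icc a b))
    (ht : t ∈ Icc a b) :
    HasDerivWithinAt (repeatedIntegral a (m + 1) g) (repeatedIntegral a m g t) (Icc a b) t := by
  induction m generalizing g with
  | zero =>
    refine (hasDerivWithinAt_integral_Icc (continuousOn_integral_Icc hg) ht).congr_of_mem
      (fun u hu => ?_) ht |>.congr_deriv ?_
    · rw [repeatedIntegral_succ 0 hg hu, repeatedIntegral_zero]
    · rw [repeatedIntegral_zero]
  | succ m ih =>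
    rw [repeatedIntegral_succ m hg ht]
    exact (ih (continuousOn_integral_Icc hg)).congr_of_mem
      (fun u hu => repeatedIntegral_succ (m + 1) hg hu) ht

lemma differentiableOn_repeatedIntegral (m : ℕ) (hg : ContinuousOn g (Icc a b)) :
    DifferentiableOn ℝ (repeatedIntegral a m g) (Icc a b) := fun t ht => by
  cases m with
  | zero =>
    rw [repeatedIntegral_zero]
    exact (hasDerivWithinAt_integral_Icc hg ht).differentiableWithinAt
  | succ m => exact (hasDerivWithinAt_repeatedIntegral_succ m hg ht).differentiableWithinAt

lemma IsSpline.repeatedIntegral {N : ℕ} {τ : ℕ → ℝ} {r : ℕ} (hN : 0 < N)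
    (hτ : StrictMonoOn τ (Iic N)) (hg : IsSpline N τ r g) (m : ℕ) :
    IsSpline N τ (r + m + 1) (repeatedIntegral (τ 0) m g) := by
  have hcont := hg.contDiffOn.continuousOn
  induction m with
  | zero =>
    rw [repeatedIntegral_zero]
    exact .of_hasDerivWithinAt hN hτ (fun _ => hasDerivWithinAt_integral_Icc hcont) hg
  | succ m ih =>
    exact .of_hasDerivWithinAt hN hτ (fun _ => hasDerivWithinAt_repeatedIntegral_succ m hcont) ih

end RepeatedIntegral

section TruncatedPower

open Polynomial

/-- The truncated power `(t - a)₊ ^ m`, with the value `1` at `t = a` when `m = 0`. -/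
noncomputable def truncPow (m : ℕ) (a t : ℝ) : ℝ :=
  if a ≤ t then (t - a) ^ m else 0

lemma ite_pow_eq_truncPow (m : ℕ) (a b t : ℝ) :
    (if a ≤ t then (t - a) ^ m / b else 0) = 1 / b * truncPow m a t := by
  unfold truncPow
  split_ifs <;> ring

lemma ite_and_eq_truncPow (m : ℕ) (a b u y t : ℝ) :
    (if a < y ∧ y ≤ t then (t - y) ^ m / b * u else 0)
      = (if a < y then 1 / b * u else 0) * truncPow m y t := by
  by_cases h : a < y <;> by_cases h' : y ≤ t <;> simp [truncPow, h, h']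
  ring

lemma hasDerivAt_truncPow {m : ℕ} (hm : 2 ≤ m) (a t : ℝ) :
    HasDerivAt (truncPow m a) (m * truncPow (m - 1) a t) t := by
  have hright : ∀ u ∈ Ici a,
      HasDerivWithinAt (truncPow m a) (m * truncPow (m - 1) a u) (Ici a) u := by
    intro u hu
    have h := ((hasDerivAt_id u).sub_const a).fun_pow m |>.hasDerivWithinAt (s := Ici a)
    refine (h.congr_of_mem (fun v hv => ?_) hu).congr_deriv ?_
    · simp [truncPow, mem_Ici.1 hv]
    · simp [truncPow, mem_Ici.1 hu]
  have hleft : ∀ u ∈ Iic a,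
      HasDerivWithinAt (truncPow m a) (m * truncPow (m - 1) a u) (Iic a) u := by
    have hzero : ∀ j ≠ 0, ∀ v ∈ Iic a, truncPow j a v = 0 := fun j hj v hv => by
      obtain h | rfl := (mem_Iic.1 hv).lt_or_eq
      · simp [truncPow, h]
      · simp [truncPow, hj]
    intro u hu
    rw [hzero (m - 1) (by omega) u hu, mul_zero]
    exact (hasDerivWithinAt_const u (Iic a) 0).congr_of_mem (hzero m (by omega)) hu
  obtain h | rfl | h := lt_trichotomy t a
  · exact (hleft t h.le).hasDerivAt (Iic_mem_nhds h)
  · have h := (hleft t self_mem_Iic).union (hright t self_mem_Ici)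
    rwa [Iic_union_Ici, hasDerivWithinAt_univ] at h
  · exact (hright t h.le).hasDerivAt (Ici_mem_nhds h)

lemma isSpline_truncPow {N m r : ℕ} {τ : ℕ → ℝ} {a : ℝ} (hτ : StrictMonoOn τ (Iic N))
    (hm : m ≤ r + 1) (ha : a ≤ τ 0) : IsSpline N τ r (truncPow m a) := by
  have hdeg : ((X - C a) ^ m).natDegree ≤ r + 1 := by
    rwa [natDegree_pow, natDegree_X_sub_C, mul_one]
  exact (IsSpline.of_polynomial hdeg).congr hτ fun t ht => by simp [truncPow, ha.trans ht.1]

/-- The integral `(1/n) ∑ᵢ cᵢ (t - xᵢ)₊ ^ m` of truncated powers against the empirical measure of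
the sample `x`, weighted by `c`. -/
noncomputable def empiricalTruncPow {n : ℕ} (m : ℕ) (x c : Fin n → ℝ) (t : ℝ) : ℝ :=
  (1 / (n : ℝ)) * ∑ i, c i * truncPow m (x i) t

variable {n m : ℕ} {x c : Fin n → ℝ} {t : ℝ}

lemma empiricalTruncPow_add (c' : Fin n → ℝ) :
    empiricalTruncPow m x (fun i => c i + c' i) t
      = empiricalTruncPow m x c t + empiricalTruncPow m x c' t := by
  simp only [empiricalTruncPow, add_mul, Finset.sum_add_distrib, mul_add]

lemma empiricalTruncPow_const_mul (b : ℝ) :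
    empiricalTruncPow m x (fun i => b * c i) t = b * empiricalTruncPow m x c t := by
  simp only [empiricalTruncPow, mul_assoc, Finset.mul_sum, mul_left_comm b]

lemma hasDerivAt_empiricalTruncPow (hm : 2 ≤ m) :
    HasDerivAt (empiricalTruncPow m x c) (m * empiricalTruncPow (m - 1) x c t) t := by
  refine ((HasDerivAt.fun_sum fun i _ =>
    (hasDerivAt_truncPow hm (x i) t).const_mul (c i)).const_mul _).congr_deriv ?_
  simp only [empiricalTruncPow, mul_left_comm _ (m : ℝ), ← Finset.mul_sum]

lemma differentiable_empiricalTruncPow (hm : 2 ≤ m) :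
    Differentiable ℝ (empiricalTruncPow m x c) := fun _ =>
  (hasDerivAt_empiricalTruncPow hm).differentiableAt

lemma isSpline_empiricalTruncPow {N r : ℕ} {τ : ℕ → ℝ} (hτ : StrictMonoOn τ (Iic N))
    (hm : m ≤ r + 1) (hc : ∀ i, τ 0 < x i → c i = 0) :
    IsSpline N τ r (empiricalTruncPow m x c) := by
  have hterm : ∀ i, IsSpline N τ r (c i • truncPow m (x i)) := fun i => by
    obtain h | h := le_or_gt (x i) (τ 0)
    · exact (isSpline_truncPow hτ hm h).const_smul _
    · exact (IsSpline.of_polynomial (p := 0) (by simp)).congr hτ fun t _ => by simp [hc i h]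
  refine ((IsSpline.sum (s := Finset.univ) fun i _ => hterm i).const_smul (1 / (n : ℝ))).congr hτ ?_
  intro t _
  simp [empiricalTruncPow]

end TruncatedPower

section HermiteInterpolation

namespace IsHermiteSplineInterp

variable {k : ℕ} {τ : ℕ → ℝ} {f g w H H' : ℝ → ℝ}

lemma isSpline (hH : IsHermiteSplineInterp k τ f H) : IsSpline (2 * k - 3) τ (2 * k - 2) H where
  contDiffOn := hH.1
  exists_polynomial i hi := by
    obtain ⟨p, hdeg, hp⟩ := hH.2.1 i hi
    exact ⟨p, by omega, hp⟩

lemma differentiableOn (hk : 2 ≤ k) (hH : IsHermiteSplineInterp k τ f H) :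
    DifferentiableOn ℝ H (Icc (τ 0) (τ (2 * k - 3))) :=
  hH.1.differentiableOn (by norm_cast; omega)

lemma of_isSpline (hH : IsSpline (2 * k - 3) τ (2 * k - 2) H)
    (heq : ∀ i < 2 * k - 2, H (τ i) = f (τ i))
    (hderiv : ∀ i < 2 * k - 2, derivWithin H (Icc (τ 0) (τ (2 * k - 3))) (τ i)
      = derivWithin f (Icc (τ 0) (τ (2 * k - 3))) (τ i)) :
    IsHermiteSplineInterp k τ f H := by
  refine ⟨hH.contDiffOn, fun i hi => ?_, fun i hi => ⟨heq i hi, hderiv i hi⟩⟩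
  obtain ⟨p, hdeg, hp⟩ := hH.exists_polynomial i hi
  exact ⟨p, by omega, hp⟩

lemma const_mul (c : ℝ) (hH : IsHermiteSplineInterp k τ f H) :
    IsHermiteSplineInterp k τ (fun t => c * f t) (fun t => c * H t) :=
  of_isSpline (hH.isSpline.const_smul c) (fun i hi => by rw [(hH.2.2 i hi).1]) fun i hi => by
    rw [derivWithin_const_mul_field, derivWithin_const_mul_field, (hH.2.2 i hi).2]

lemma add (hk : 2 ≤ k) (hτ : StrictMonoOn τ (Iic (2 * k - 3)))
    (hf : DifferentiableOn ℝ f (Icc (τ 0) (τ (2 * k - 3))))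
    (hg : DifferentiableOn ℝ g (Icc (τ 0) (τ (2 * k - 3))))
    (hH : IsHermiteSplineInterp k τ f H) (hH' : IsHermiteSplineInterp k τ g H') :
    IsHermiteSplineInterp k τ (fun t => f t + g t) (fun t => H t + H' t) :=
  of_isSpline (hH.isSpline.add hH'.isSpline)
    (fun i hi => by rw [(hH.2.2 i hi).1, (hH'.2.2 i hi).1]) fun i hi => by
    have hi' := mem_Icc_of_strictMonoOn hτ (show i ≤ 2 * k - 3 by omega)
    rw [derivWithin_fun_add (hH.differentiableOn hk _ hi') (hH'.differentiableOn hk _ hi'),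
      derivWithin_fun_add (hf _ hi') (hg _ hi'), (hH.2.2 i hi).2, (hH'.2.2 i hi).2]

theorem eqOn (hk : 2 ≤ k) (hτ : StrictMonoOn τ (Iic (2 * k - 3)))
    (hH : IsHermiteSplineInterp k τ f H) (hH' : IsHermiteSplineInterp k τ f H') :
    EqOn H H' (Icc (τ 0) (τ (2 * k - 3))) := by
  have hsub : IsSpline (2 * k - 3) τ (2 * k - 3 + 1) (H - H') := by
    rw [show 2 * k - 3 + 1 = 2 * k - 2 by omega]
    exact hH.isSpline.sub hH'.isSpline
  have hzero := hsub.eqOn_zero_of_double_zeros (by omega) hτ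
    (fun i hi => sub_eq_zero.2 ((hH.2.2 i (by omega)).1.trans (hH'.2.2 i (by omega)).1.symm))
    fun i hi => by
      have hi' := mem_Icc_of_strictMonoOn hτ hi
      rw [derivWithin_sub (hH.differentiableOn hk _ hi') (hH'.differentiableOn hk _ hi'),
        (hH.2.2 i (by omega)).2, (hH'.2.2 i (by omega)).2, sub_self]
  exact fun t ht => sub_eq_zero.1 (hzero ht)

theorem eqOn_add_of_isSpline (hk : 2 ≤ k) (hτ : StrictMonoOn τ (Iic (2 * k - 3)))
    (hf : DifferentiableOn ℝ f (Icc (τ 0) (τ (2 * k - 3))))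
    (hH : IsHermiteSplineInterp k τ f H)
    (hfw : IsSpline (2 * k - 3) τ (2 * k - 2) fun t => f t + w t)
    (hw : ∀ i < 2 * k - 2, w (τ i) = 0)
    (hw' : ∀ i < 2 * k - 2, HasDerivWithinAt w 0 (Icc (τ 0) (τ (2 * k - 3))) (τ i)) :
    EqOn H (fun t => f t + w t) (Icc (τ 0) (τ (2 * k - 3))) := by
  refine eqOn hk hτ hH (of_isSpline hfw (fun i hi => by rw [hw i hi, add_zero]) fun i hi => ?_)
  have hi' := mem_Icc_of_strictMonoOn hτ (show i ≤ 2 * k - 3 by omega)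
  have hU := uniqueDiffOn_Icc_of_strictMonoOn (show 0 < 2 * k - 3 by omega) hτ _ hi'
  rw [derivWithin_fun_add (hf _ hi') (hw' i hi).differentiableWithinAt, (hw' i hi).derivWithin hU,
    add_zero]

end IsHermiteSplineInterp

end HermiteInterpolation

section Linearization

open Polynomial

/-- The difference `t ^ k / k - (1/n) ∑ᵢ dᵢ (t - xᵢ)₊ ^ (k - 1)` of the two sides of the inequality
(H1) characterizing the maximum likelihood estimator `ĝ`, where `dᵢ` stands for `1 / ĝ(xᵢ)`. -/
noncomputable def characterizationSlack {n : ℕ} (k : ℕ) (x d : Fin n → ℝ) (t : ℝ) : ℝ :=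
  t ^ k / k - empiricalTruncPow (k - 1) x d t

lemma hasDerivAt_characterizationSlack {k n : ℕ} (hk : 3 ≤ k) (x d : Fin n → ℝ) (t : ℝ) :
    HasDerivAt (characterizationSlack k x d)
      (t ^ (k - 1) - (k - 1) * empiricalTruncPow (k - 2) x d t) t := by
  have hk0 : (k : ℝ) ≠ 0 := by norm_cast; omega
  refine (((hasDerivAt_pow k t).div_const k).sub
    (hasDerivAt_empiricalTruncPow (show 2 ≤ k - 1 by omega))).congr_deriv ?_
  rw [mul_div_cancel_left₀ _ hk0, Nat.sub_sub, Nat.cast_sub (by omega), Nat.cast_one]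

/-- The function `Y_n(t) = (1/n) ∑ᵢ (t - xᵢ)₊ ^ m / m!`, where `m = k - 1` in the paper. -/
noncomputable def empiricalProcess {n : ℕ} (m : ℕ) (x : Fin n → ℝ) : ℝ → ℝ :=
  empiricalTruncPow m x fun _ => 1 / m.factorial

/-- The deterministic error `f̌` of the estimator `g` of `g₀`, linearized at the constant `γ`, with
base point `a = τ 0` and `m = k - 1` in the paper. -/
noncomputable def estimationError (a : ℝ) (m : ℕ) (γ : ℝ) (g g₀ : ℝ → ℝ) (t : ℝ) : ℝ :=
  -repeatedIntegral a m (fun s => (1 / g s - 1 / γ) * (g s - g₀ s)) t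

/-- The stochastic error `Δ`: the weight `1 / g - 1 / γ` integrated against the difference between
the empirical measure of `x` on `(a, ∞)` and the density `g₀`, with base point `a = τ 0` and
`m = k - 1` in the paper. -/
noncomputable def empiricalError {n : ℕ} (a : ℝ) (m : ℕ) (x : Fin n → ℝ) (γ : ℝ) (g g₀ : ℝ → ℝ)
    (t : ℝ) : ℝ :=
  empiricalTruncPow m x
      (fun i => if a < x i then 1 / m.factorial * (1 / g (x i) - 1 / γ) else 0) t
    - repeatedIntegral a m (fun s => (1 / g s - 1 / γ) * g₀ s) t

section

variable {a b γ : ℝ} {g g₀ : ℝ → ℝ}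

lemma continuousOn_one_div_sub (hg : ContinuousOn g (Icc a b)) (hne : ∀ s ∈ Icc a b, g s ≠ 0) :
    ContinuousOn (fun s => 1 / g s - 1 / γ) (Icc a b) :=
  (continuousOn_const.div hg hne).sub continuousOn_const

lemma differentiableOn_estimationError (m : ℕ) (hg : ContinuousOn g (Icc a b))
    (hne : ∀ s ∈ Icc a b, g s ≠ 0) (hg₀ : ContinuousOn g₀ (Icc a b)) :
    DifferentiableOn ℝ (estimationError a m γ g g₀) (Icc a b) :=
  (differentiableOn_repeatedIntegral m
    ((continuousOn_one_div_sub hg hne).mul (hg.sub hg₀))).neg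

lemma differentiableOn_empiricalError {n m : ℕ} (hm : 2 ≤ m) (x : Fin n → ℝ)
    (hg : ContinuousOn g (Icc a b)) (hne : ∀ s ∈ Icc a b, g s ≠ 0)
    (hg₀ : ContinuousOn g₀ (Icc a b)) :
    DifferentiableOn ℝ (empiricalError a m x γ g g₀) (Icc a b) :=
  (differentiable_empiricalTruncPow hm).differentiableOn.sub
    (differentiableOn_repeatedIntegral m ((continuousOn_one_div_sub hg hne).mul hg₀))

lemma repeatedIntegral_linearization {t : ℝ} (m : ℕ) (hg : ContinuousOn g (Icc a b))
    (hne : ∀ s ∈ Icc a b, g s ≠ 0) (hg₀ : ContinuousOn g₀ (Icc a b)) (hγ : γ ≠ 0)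
    (ht : t ∈ Icc a b) :
    -γ * (repeatedIntegral a m (fun s => (1 / g s - 1 / γ) * (g s - g₀ s)) t
        + repeatedIntegral a m (fun s => (1 / g s - 1 / γ) * g₀ s) t)
      = repeatedIntegral a m (fun s => g s - γ) t := by
  have hu : ContinuousOn (fun s => 1 / g s - 1 / γ) (Icc a b) := continuousOn_one_div_sub hg hne
  have hadd := repeatedIntegral_add (f := fun s => (1 / g s - 1 / γ) * (g s - g₀ s))
    (g := fun s => (1 / g s - 1 / γ) * g₀ s) m (hu.mul (hg.sub hg₀)) (hu.mul hg₀) ht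
  rw [← hadd, ← repeatedIntegral_const_mul]
  refine repeatedIntegral_congr m (fun s hs => ?_) ht
  have := hne s hs
  field_simp
  ring

end

theorem isSpline_linearization {k n : ℕ} {τ : ℕ → ℝ} {γ : ℝ} {g g₀ : ℝ → ℝ} (hk : 2 ≤ k)
    (hτ : StrictMonoOn τ (Iic (2 * k - 3))) (x : Fin n → ℝ)
    (hg : IsSpline (2 * k - 3) τ (k - 2) g) (hne : ∀ t ∈ Icc (τ 0) (τ (2 * k - 3)), g t ≠ 0)
    (hg₀ : ContinuousOn g₀ (Icc (τ 0) (τ (2 * k - 3)))) (hγ : γ ≠ 0) :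
    IsSpline (2 * k - 3) τ (2 * k - 2) fun t => empiricalProcess (k - 1) x t
      + γ * (estimationError (τ 0) (k - 1) γ g g₀ t + empiricalError (τ 0) (k - 1) x γ g g₀ t)
      + γ / (k - 1).factorial * characterizationSlack k x (fun i => 1 / g (x i)) t := by
  set q : ℝ := ((k - 1).factorial : ℝ)
  -- The data beyond `τ 0` cancel, so that no truncated power has its kink inside the interval.
  let c : Fin n → ℝ := fun i => 1 / q
    + (γ * (if τ 0 < x i then 1 / q * (1 / g (x i) - 1 / γ) else 0) + -(γ / q) * (1 / g (x i)))
  have hc : ∀ i, τ 0 < x i → c i = 0 := fun i hi => by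
    simp only [c, if_pos hi]
    field_simp
    ring
  have hdata : IsSpline (2 * k - 3) τ (2 * k - 2) (empiricalTruncPow (k - 1) x c) :=
    isSpline_empiricalTruncPow hτ (by omega) hc
  have hintegral : IsSpline (2 * k - 3) τ (2 * k - 2)
      (repeatedIntegral (τ 0) (k - 1) fun s => g s - γ) := by
    have hconst : IsSpline (2 * k - 3) τ (k - 2) fun _ => γ := by
      simpa using IsSpline.of_polynomial ((natDegree_C γ).trans_le (k - 2 + 1).zero_le)
    have h := (hg.sub hconst).repeatedIntegral (by omega) hτ (k - 1)
    rwa [show k - 2 + (k - 1) + 1 = 2 * k - 2 by omega] at h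
  have hpow : IsSpline (2 * k - 3) τ (2 * k - 2) ((C (γ / q / k) * X ^ k).eval ·) :=
    .of_polynomial ((natDegree_C_mul_X_pow_le _ _).trans (by omega))
  refine ((hdata.add hintegral).add hpow).congr hτ fun t ht => ?_
  have hlin := repeatedIntegral_linearization (k - 1) hg.contDiffOn.continuousOn hne hg₀ hγ ht
  simp only [Pi.add_apply, c, empiricalTruncPow_add, empiricalTruncPow_const_mul, eval_mul,
    eval_C, eval_pow, eval_X, empiricalProcess, estimationError, empiricalError,
    characterizationSlack]
  linear_combination hlin

lemma characterizationSlack_eq_zero_and_hasDerivAt {k n : ℕ} (hk : 3 ≤ k) {x d : Fin n → ℝ} {t : ℝ}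
    (h : empiricalTruncPow (k - 1) x d t = t ^ k / k)
    (h' : empiricalTruncPow (k - 2) x d t = t ^ (k - 1) / ((k : ℝ) - 1)) :
    characterizationSlack k x d t = 0 ∧ HasDerivAt (characterizationSlack k x d) 0 t := by
  have hk1 : (k : ℝ) - 1 ≠ 0 := sub_ne_zero.2 (by norm_cast; omega)
  refine ⟨by rw [characterizationSlack, h, sub_self],
    (hasDerivAt_characterizationSlack hk x d t).congr_deriv ?_⟩
  rw [h', mul_div_cancel₀ _ hk1, sub_self]

theorem linearized_interpolation_error_le {k n : ℕ} {τ : ℕ → ℝ} {γ : ℝ} {g g₀ HY Hf HΔ : ℝ → ℝ}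
    {x : Fin n → ℝ} (hk : 3 ≤ k) (hτ : StrictMonoOn τ (Iic (2 * k - 3)))
    (hg : IsSpline (2 * k - 3) τ (k - 2) g) (hne : ∀ t ∈ Icc (τ 0) (τ (2 * k - 3)), g t ≠ 0)
    (hg₀ : ContinuousOn g₀ (Icc (τ 0) (τ (2 * k - 3)))) (hγ : 0 < γ)
    (hslack : ∀ t ∈ Icc (τ 0) (τ (2 * k - 3)),
      0 ≤ characterizationSlack k x (fun i => 1 / g (x i)) t)
    (hknot : ∀ j < 2 * k - 2, characterizationSlack k x (fun i => 1 / g (x i)) (τ j) = 0 ∧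
      HasDerivAt (characterizationSlack k x fun i => 1 / g (x i)) 0 (τ j))
    (hHY : IsHermiteSplineInterp k τ (empiricalProcess (k - 1) x) HY)
    (hHf : IsHermiteSplineInterp k τ (estimationError (τ 0) (k - 1) γ g g₀) Hf)
    (hHΔ : IsHermiteSplineInterp k τ (empiricalError (τ 0) (k - 1) x γ g g₀) HΔ)
    {t : ℝ} (ht : t ∈ Icc (τ 0) (τ (2 * k - 3))) :
    γ * ((estimationError (τ 0) (k - 1) γ g g₀ t - Hf t)
        + (empiricalError (τ 0) (k - 1) x γ g g₀ t - HΔ t))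
      ≤ HY t - empiricalProcess (k - 1) x t := by
  have hk2 : 2 ≤ k := by omega
  have hgc := hg.contDiffOn.continuousOn
  have hY : DifferentiableOn ℝ (empiricalProcess (k - 1) x) (Icc (τ 0) (τ (2 * k - 3))) :=
    (differentiable_empiricalTruncPow (by omega)).differentiableOn
  have hf := differentiableOn_estimationError (γ := γ) (k - 1) hgc hne hg₀
  have hΔ := differentiableOn_empiricalError (γ := γ) (show 2 ≤ k - 1 by omega) x hgc hne hg₀
  have hsum := hHY.add hk2 hτ hY ((hf.fun_add hΔ).const_mul γ)
    ((hHf.add hk2 hτ hf hΔ hHΔ).const_mul γ)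
  have heq := hsum.eqOn_add_of_isSpline hk2 hτ (hY.fun_add ((hf.fun_add hΔ).const_mul γ))
    (isSpline_linearization hk2 hτ x hg hne hg₀ hγ.ne')
    (fun j hj => by rw [(hknot j hj).1, mul_zero])
    (fun j hj => by simpa using (((hknot j hj).2.const_mul _).hasDerivWithinAt)) ht
  have hnonneg := mul_nonneg (div_nonneg hγ.le ((k - 1).factorial.cast_nonneg (α := ℝ)))
    (hslack t ht)
  linarith

end Linearization

theorem stmt3_general {k : ℕ} (hk : 3 ≤ k) {n : ℕ} {x : Fin n → ℝ} {ghat : ℝ → ℝ} {τ : ℕ → ℝ}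
    (hτ : StrictMonoOn τ (Iic (2 * k - 3)))
    (hghat : ∀ t ∈ Icc (τ 0) (τ (2 * k - 3)) ∪ range x, ghat t ≠ 0)
    (H1 : ∀ t ∈ Icc (τ 0) (τ (2 * k - 3)),
      (1 / (n : ℝ)) * ∑ i : Fin n, (if x i ≤ t then (t - x i) ^ (k - 1) / ghat (x i) else 0)
        ≤ t ^ k / (k : ℝ))
    (H2 : ∀ j < 2 * k - 2,
      (1 / (n : ℝ)) * ∑ i : Fin n,
          (if x i ≤ τ j then (τ j - x i) ^ (k - 1) / ghat (x i) else 0)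
        = τ j ^ k / (k : ℝ) ∧
      (1 / (n : ℝ)) * ∑ i : Fin n,
          (if x i ≤ τ j then (τ j - x i) ^ (k - 2) / ghat (x i) else 0)
        = τ j ^ (k - 1) / ((k : ℝ) - 1))
    (H3a : ContDiffOn ℝ (k - 2 : ℕ) ghat (Icc (τ 0) (τ (2 * k - 3))))
    (H3b : ∀ j < 2 * k - 3, ∃ p : Polynomial ℝ, p.natDegree ≤ k - 1 ∧
      ∀ t ∈ Icc (τ j) (τ (j + 1)), ghat t = p.eval t)
    {g₀ : ℝ → ℝ} (hg₀ : ContinuousOn g₀ (Icc (τ 0) (τ (2 * k - 3)))) {γ : ℝ} (hγ : 0 < γ)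
    {Yn fch Δ : ℝ → ℝ}
    (hYn : ∀ t, Yn t = (1 / (n : ℝ)) * ∑ i : Fin n,
      (if x i ≤ t then (t - x i) ^ (k - 1) / ((k - 1).factorial : ℝ) else 0))
    (hfch : ∀ t, fch t = -∫ s in (τ 0)..t,
      ((t - s) ^ (k - 1) / ((k - 1).factorial : ℝ)) * (1 / ghat s - 1 / γ) * (ghat s - g₀ s))
    (hΔ : ∀ t, Δ t = (1 / (n : ℝ)) * ∑ i : Fin n,
        (if τ 0 < x i ∧ x i ≤ t then
          ((t - x i) ^ (k - 1) / ((k - 1).factorial : ℝ)) * (1 / ghat (x i) - 1 / γ)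
        else 0)
      - ∫ s in (τ 0)..t,
          ((t - s) ^ (k - 1) / ((k - 1).factorial : ℝ)) * (1 / ghat s - 1 / γ) * g₀ s)
    {HY Hf HΔ : ℝ → ℝ} (hHY : IsHermiteSplineInterp k τ Yn HY)
    (hHf : IsHermiteSplineInterp k τ fch Hf) (hHΔ : IsHermiteSplineInterp k τ Δ HΔ)
    {t : ℝ} (ht : t ∈ Icc (τ 0) (τ (2 * k - 3))) :
    γ * ((fch t - Hf t) + (Δ t - HΔ t)) ≤ HY t - Yn t := by
  have hne : ∀ t ∈ Icc (τ 0) (τ (2 * k - 3)), ghat t ≠ 0 := fun t ht => hghat t (.inl ht)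
  have hspline : IsSpline (2 * k - 3) τ (k - 2) ghat :=
    ⟨H3a, fun j hj => (H3b j hj).imp fun _ hp => ⟨by omega, hp.2⟩⟩
  obtain rfl : Yn = empiricalProcess (k - 1) x := funext fun t => by
    simp only [hYn, ite_pow_eq_truncPow, empiricalProcess, empiricalTruncPow]
  obtain rfl : fch = estimationError (τ 0) (k - 1) γ ghat g₀ := funext fun t => by
    simp only [hfch, estimationError, repeatedIntegral, mul_assoc]
  obtain rfl : Δ = empiricalError (τ 0) (k - 1) x γ ghat g₀ := funext fun t => by
    simp only [hΔ, ite_and_eq_truncPow, empiricalError, repeatedIntegral, mul_assoc,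
      empiricalTruncPow]
  simp only [ite_pow_eq_truncPow] at H1 H2
  exact linearized_interpolation_error_le hk hτ hspline hne hg₀ hγ
    (fun t ht => sub_nonneg.2 (H1 t ht))
    (fun j hj => characterizationSlack_eq_zero_and_hasDerivAt hk (H2 j hj).1 (H2 j hj).2)
    hHY hHf hHΔ ht

/-- linearized characterization inequality for the MLE (Lemma 4.6 of the
paper): under the MLE characterization hypotheses (H1)–(H3) at the knots
`τ 0 < ⋯ < τ (2k-3)`, the Hermite interpolation error of the empirical process `Yₙ`
dominates `γ` times the sum of the interpolation errors of `f̌` and `Δ`. -/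
theorem stmt3 (k : ℕ) (hk : 3 ≤ k) (n : ℕ) (hn : 1 ≤ n)
    (x : Fin n → ℝ) (hx : ∀ i, 0 < x i)
    (ghat : ℝ → ℝ) (hghat_pos : ∀ t, 0 < t → 0 < ghat t)
    (hghat_cont : ContinuousOn ghat (Ioi 0))
    (τ : ℕ → ℝ) (hτ0 : 0 < τ 0) (hτ : ∀ j, j < 2*k-3 → τ j < τ (j+1))
    -- (H1): for every t > 0, t^k/k ≥ (1/n) ∑_{i : xᵢ ≤ t} (t - xᵢ)^{k-1} / ĝ(xᵢ)
    (H1 : ∀ t : ℝ, 0 < t →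
      (1/(n:ℝ)) * ∑ i : Fin n,
          (if x i ≤ t then (t - x i) ^ (k-1) / ghat (x i) else 0)
        ≤ t ^ k / (k : ℝ))
    -- (H2): equality in (H1) at each τ j, and the derivative condition
    (H2 : ∀ j, j < 2*k-2 →
      (1/(n:ℝ)) * ∑ i : Fin n,
          (if x i ≤ τ j then (τ j - x i) ^ (k-1) / ghat (x i) else 0)
        = (τ j) ^ k / (k : ℝ) ∧
      (1/(n:ℝ)) * ∑ i : Fin n,
          (if x i ≤ τ j then (τ j - x i) ^ (k-2) / ghat (x i) else 0)
        = (τ j) ^ (k-1) / ((k : ℝ) - 1))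
    -- (H3): ĝ is a spline of degree k-1 on [τ 0, τ (2k-3)] with knots τ j
    (H3a : ContDiffOn ℝ (k-2 : ℕ) ghat (Icc (τ 0) (τ (2*k-3))))
    (H3b : ∀ j, j < 2*k-3 → ∃ p : Polynomial ℝ, p.natDegree ≤ k-1 ∧
      ∀ t ∈ Icc (τ j) (τ (j+1)), ghat t = p.eval t)
    (g₀ : ℝ → ℝ) (hg₀_pos : ∀ t, 0 < t → 0 < g₀ t)
    (hg₀_cont : ContinuousOn g₀ (Ioi 0))
    (Yn fch Δ : ℝ → ℝ)
    (hYn : ∀ t, Yn t = (1/(n:ℝ)) * ∑ i : Fin n,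
        (if x i ≤ t then (t - x i) ^ (k-1) / (Nat.factorial (k-1) : ℝ) else 0))
    (hfch : ∀ t, fch t = - ∫ s in (τ 0)..t,
        ((t - s) ^ (k-1) / (Nat.factorial (k-1) : ℝ)) *
          (1 / ghat s - 1 / g₀ (τ 0)) * (ghat s - g₀ s))
    (hΔ : ∀ t, Δ t = (1/(n:ℝ)) * ∑ i : Fin n,
        (if τ 0 < x i ∧ x i ≤ t then
          ((t - x i) ^ (k-1) / (Nat.factorial (k-1) : ℝ)) *
            (1 / ghat (x i) - 1 / g₀ (τ 0))
         else 0)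
      - ∫ s in (τ 0)..t,
          ((t - s) ^ (k-1) / (Nat.factorial (k-1) : ℝ)) *
            (1 / ghat s - 1 / g₀ (τ 0)) * g₀ s)
    (HY Hf HΔ : ℝ → ℝ)
    (hHY : IsHermiteSplineInterp k τ Yn HY)
    (hHf : IsHermiteSplineInterp k τ fch Hf)
    (hHΔ : IsHermiteSplineInterp k τ Δ HΔ) :
    ∀ t ∈ Icc (τ 0) (τ (2*k-3)),
      HY t - Yn t ≥ g₀ (τ 0) * ((fch t - Hf t) + (Δ t - HΔ t)) := by
  have hpos : ∀ t ∈ Icc (τ 0) (τ (2 * k - 3)), 0 < t := fun _ ht => hτ0.trans_le ht.1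
  exact fun _ => stmt3_general hk (strictMonoOn_Iic_of_lt_succ hτ)
    (fun t ht => (hghat_pos t (ht.elim (hpos t) fun ⟨i, hi⟩ => hi ▸ hx i)).ne')
    (fun _ ht => H1 _ (hpos _ ht)) H2 H3a H3b (hg₀_cont.mono hpos) (hg₀_pos _ hτ0)
    hYn hfch hΔ hHY hHf hHΔ
end
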